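/- arXiv:1810.03878 — 5 statements merged into one kernel-verified Lean document; each statement's English description precedes it below -/
import Mathlib

section
/- Let E_{2k} be the m×m skew-symmetric matrix consisting of k diagonal copies of E = [[0,1],[-1,0]] followed by zeros. For a skew-symmetric m×m matrix A over a field of odd characteristic, let Â be the matrix obtained by deleting row and column 2k. If A has rank 2r and Â has the same rank 2r and row 2k-1 of Â is zero, then tr(E_{2k}A) = tr(E_{2k-2}Â). -/
open Matrix
def IsSkewSym {K : Type} [Field K] {m : ℕ} (A : Matrix (Fin m) (Fin m) K) : Prop :=
  Aᵀ = -A ∧ ∀ i, A i i = 0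

def Estd (K : Type) [Field K] (k m : ℕ) : Matrix (Fin m) (Fin m) K :=
  Matrix.of fun i j =>
    if j.val = i.val + 1 ∧ i.val % 2 = 0 ∧ j.val < 2*k then 1
    else if i.val = j.val + 1 ∧ j.val % 2 = 0 ∧ i.val < 2*k then -1 else 0

noncomputable def na (K : Type) [Field K] (r m : ℕ) : ℕ :=
  Nat.card {A : Matrix (Fin m) (Fin m) K // IsSkewSym A ∧ A.rank = r}

noncomputable def Na (K : Type) [Field K] (r m : ℕ) : ℕ :=
  Nat.card {A : Matrix (Fin m) (Fin m) K // IsSkewSym A ∧ A.rank ≤ r}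

noncomputable def wSmall (K : Type) [Field K] (k r m : ℕ) : ℕ :=
  Nat.card {A : Matrix (Fin m) (Fin m) K //
    IsSkewSym A ∧ A.rank = 2*r ∧ Matrix.trace (Estd K k m * A) ≠ 0}

noncomputable def Wcap (K : Type) [Field K] (k t m : ℕ) : ℕ :=
  Nat.card {A : Matrix (Fin m) (Fin m) K //
    IsSkewSym A ∧ A.rank ≤ 2*t ∧ Matrix.trace (Estd K k m * A) ≠ 0}

noncomputable def projWt (K : Type) [Field K] (m t : ℕ)
    (φ : Matrix (Fin m) (Fin m) K →ₗ[K] K) : ℕ :=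
  Nat.card {x : Projectivization K (Matrix (Fin m) (Fin m) K) //
    ∃ (A : Matrix (Fin m) (Fin m) K) (h : A ≠ 0),
      x = Projectivization.mk K A h ∧ IsSkewSym A ∧ A.rank ≤ 2*t ∧ φ A ≠ 0}

def delIdx (m i : ℕ) (j : Fin (m-1)) : Fin m :=
  if j.val < i then ⟨j.val, by have := j.isLt; omega⟩
  else ⟨j.val + 1, by have := j.isLt; omega⟩

/-- If a submatrix obtained by selecting rows and columns has the full rank of the matrix, then a
zero row of the submatrix is zero in the original matrix as well. -/
theorem row_eq_zero_of_rank_submatrix_eq {K m n p q : Type*} [Field K] [Fintype n]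
    [Fintype p] [Fintype q] (A : Matrix m n K) (f : p → m) (g : q → n)
    (h : (A.submatrix f g).rank = A.rank) (i : p) (hi : ∀ j, A.submatrix f g i j = 0) (j : n) :
    A (f i) j = 0 := by
  have hle : Submodule.span K (Set.range (A.submatrix f g).col) ≤
      Submodule.span K (Set.range (A.submatrix f id).col) := by
    apply Submodule.span_mono
    rintro _ ⟨j, rfl⟩
    exact ⟨g j, rfl⟩
  have hrank : (A.submatrix f id).rank ≤ A.rank := A.rank_submatrix_le f id
  have heq := Submodule.eq_of_le_of_finrank_le hle (by
    rw [← rank_eq_finrank_span_cols, ← rank_eq_finrank_span_cols, h]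
    exact hrank)
  have hker : Submodule.span K (Set.range (A.submatrix f g).col) ≤
      LinearMap.ker (LinearMap.proj i : (p → K) →ₗ[K] K) := by
    rw [Submodule.span_le]
    rintro _ ⟨j, rfl⟩
    exact hi j
  rw [heq] at hker
  exact hker (Submodule.subset_span ⟨j, rfl⟩)

theorem delIdx_eq_succAbove (n : ℕ) (b : Fin (n + 1)) : delIdx (n + 1) b.val = b.succAbove := by
  funext j
  ext
  simp only [delIdx, Fin.succAbove, Fin.lt_def, Fin.val_castSucc]
  split_ifs <;> rfl

theorem Estd_submatrix_succAbove (K : Type) [Field K] (n k : ℕ) (b : Fin (n + 1))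
    (hb : b.val + 1 = 2 * k) :
    (Estd K k (n + 1)).submatrix b.succAbove b.succAbove = Estd K (k - 1) n := by
  ext i j
  simp only [Estd, submatrix_apply, of_apply, ← delIdx_eq_succAbove, delIdx]
  split_ifs <;> first | rfl | (exfalso; grind)

theorem Estd_last_eq_zero (K : Type) [Field K] (k m : ℕ) (b j : Fin m)
    (hb : b.val + 1 = 2 * k) (hj : j.val + 1 ≠ b.val) :
    Estd K k m b j = 0 ∧ Estd K k m j b = 0 := by
  simp only [Estd, of_apply]
  constructor <;> split_ifs <;> first | rfl | (exfalso; omega)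

theorem stmt12 (K : Type) [Field K] (hchar : ringChar K ≠ 2) (m k r : ℕ)
    (hm : 2 ≤ m) (hk : 1 ≤ k) (hkm : 2*k ≤ m)
    (A : Matrix (Fin m) (Fin m) K) (hA : IsSkewSym A) (hr : A.rank = 2*r)
    (hhat : (A.submatrix (delIdx m (2*k-1)) (delIdx m (2*k-1))).rank = 2*r)
    (hrow : ∀ j, A.submatrix (delIdx m (2*k-1)) (delIdx m (2*k-1)) ⟨2*k-2, by omega⟩ j = 0) :
    Matrix.trace (Estd K k m * A)
      = Matrix.trace (Estd K (k-1) (m-1) *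
          A.submatrix (delIdx m (2*k-1)) (delIdx m (2*k-1))) := by
  obtain ⟨n, rfl⟩ : ∃ n, m = n + 1 := ⟨m - 1, by omega⟩
  obtain ⟨b, hb⟩ : ∃ b : Fin (n + 1), b.val = 2 * k - 1 := ⟨⟨2 * k - 1, by omega⟩, rfl⟩
  have hb' : b.val + 1 = 2 * k := by omega
  rw [← hb] at hhat hrow ⊢
  have hz := row_eq_zero_of_rank_submatrix_eq A _ _ (hhat.trans hr.symm) _ hrow b
  rw [delIdx_eq_succAbove] at hz ⊢
  have hterm (j : Fin n) :
      Estd K k (n + 1) b (b.succAbove j) * A (b.succAbove j) b = 0 ∧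
      Estd K k (n + 1) (b.succAbove j) b * A b (b.succAbove j) = 0 := by
    by_cases hj : j.val = 2 * k - 2
    · have hzj : A (b.succAbove j) b = 0 := by
        rw [← hz]
        exact congrArg (fun i => A (b.succAbove i) b) (Fin.ext hj)
      have hskew : A b (b.succAbove j) = -A (b.succAbove j) b :=
        congrFun (congrFun hA.1 (b.succAbove j)) b
      simp [hskew, hzj]
    · have hne : (b.succAbove j).val + 1 ≠ b.val := by
        rw [← delIdx_eq_succAbove, delIdx]
        split_ifs <;> grind
      obtain ⟨h₁, h₂⟩ := Estd_last_eq_zero K k (n + 1) b _ hb' hne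
      simp [h₁, h₂]
  have hbb : Estd K k (n + 1) b b = 0 := (Estd_last_eq_zero K k (n + 1) b b hb' (by omega)).1
  change _ = trace (Estd K (k - 1) n * A.submatrix b.succAbove b.succAbove)
  rw [← Estd_submatrix_succAbove K n k b hb']
  simp only [trace, diag_apply, mul_apply, Fin.sum_univ_succAbove _ b, submatrix_apply,
    (hterm _).1, (hterm _).2, hbb, zero_mul, Finset.sum_const_zero, zero_add]
end

section
/- Let q be odd, m ≥ 2, 1 ≤ 2t ≤ m, 1 ≤ 2k ≤ m. Define w_{2k}(2r,m) = #{A skew-symmetric m×m of rank exactly 2r over F_q : tr(E_{2k}A) ≠ 0}. Then w_{2k}(2r,m) = q^{2r} w_{2k-2}(2r, m-2) + (q-1)q^{2r-1}(n_a(2r,m-1) - n_a(2r,m-2)) + (q-1)q^{m-2} n_a(2r-2, m-1) - q^{2r-2} w_{2k-2}(2r-2, m-2) - (q-1)q^{2r-3}(n_a(2r-2,m-1) - n_a(2r-2,m-2)). -/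
open Matrix
/-- The skew-symmetric matrix obtained from `B` by adjoining a first row `(0, x)`. -/
def border {K : Type} [Field K] {n : ℕ} (x : Fin n → K) (B : Matrix (Fin n) (Fin n) K) :
    Matrix (Fin (n + 1)) (Fin (n + 1)) K :=
  Matrix.of (Fin.cons (Fin.cons 0 x) fun i => Fin.cons (-x i) (B i))

section Border

variable {K : Type} [Field K] {n : ℕ}

@[simp] lemma border_zero_zero (x : Fin n → K) (B : Matrix (Fin n) (Fin n) K) :
    border x B 0 0 = 0 := rfl

@[simp] lemma border_zero_succ (x : Fin n → K) (B : Matrix (Fin n) (Fin n) K) (j : Fin n) :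
    border x B 0 j.succ = x j := rfl

@[simp] lemma border_succ_zero (x : Fin n → K) (B : Matrix (Fin n) (Fin n) K) (i : Fin n) :
    border x B i.succ 0 = -x i := rfl

@[simp] lemma border_succ_succ (x : Fin n → K) (B : Matrix (Fin n) (Fin n) K) (i j : Fin n) :
    border x B i.succ j.succ = B i j := rfl

lemma IsSkewSym.apply_swap {A : Matrix (Fin n) (Fin n) K} (hA : IsSkewSym A) (i j : Fin n) :
    A j i = -A i j := congrFun (congrFun hA.1 i) j

lemma isSkewSym_border {x : Fin n → K} {B : Matrix (Fin n) (Fin n) K} :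
    IsSkewSym (border x B) ↔ IsSkewSym B := by
  constructor
  · intro h
    refine ⟨?_, fun i => h.2 i.succ⟩
    ext i j
    exact h.apply_swap i.succ j.succ
  · intro h
    constructor
    · ext i j
      refine Fin.cases ?_ (fun i => ?_) i <;> refine Fin.cases ?_ (fun j => ?_) j
      · simp
      · simp
      · simp
      · simpa using h.apply_swap i j
    · intro i
      refine Fin.cases rfl (fun i => h.2 i) i

lemma IsSkewSym.eq_border {A : Matrix (Fin (n + 1)) (Fin (n + 1)) K} (hA : IsSkewSym A) :
    A = border (fun j => A 0 j.succ) (A.submatrix Fin.succ Fin.succ) := by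
  ext i j
  refine Fin.cases ?_ (fun i => ?_) i <;> refine Fin.cases ?_ (fun j => ?_) j
  · simpa using hA.2 0
  · simp
  · simpa using hA.apply_swap 0 i.succ
  · simp

@[simp] lemma border_submatrix (x : Fin n → K) (B : Matrix (Fin n) (Fin n) K) :
    (border x B).submatrix Fin.succ Fin.succ = B := rfl

lemma border_injective :
    Function.Injective fun p : (Fin n → K) × Matrix (Fin n) (Fin n) K => border p.1 p.2 := by
  rintro ⟨x, B⟩ ⟨x', B'⟩ h
  have h' : border x B = border x' B' := h
  ext i j
  · exact congrFun (congrFun h' 0) i.succ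
  · rename_i j
    exact congrFun (congrFun h' i.succ) j.succ

/-- Skew-symmetric matrices with a given property are counted through their borderings. -/
lemma card_isSkewSym_succ (P : Matrix (Fin (n + 1)) (Fin (n + 1)) K → Prop) :
    Nat.card {A : Matrix (Fin (n + 1)) (Fin (n + 1)) K // IsSkewSym A ∧ P A} =
      Nat.card {p : (Fin n → K) × Matrix (Fin n) (Fin n) K //
        IsSkewSym p.2 ∧ P (border p.1 p.2)} := by
  symm
  refine Nat.card_eq_of_bijective
    (fun p => ⟨border p.1.1 p.1.2, isSkewSym_border.2 p.2.1, p.2.2⟩) ⟨?_, ?_⟩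
  · intro p p' h
    exact Subtype.ext (border_injective (congrArg Subtype.val h))
  · rintro ⟨A, hA, hP⟩
    have e := hA.eq_border
    refine ⟨⟨(fun j => A 0 j.succ, A.submatrix Fin.succ Fin.succ), ?_, ?_⟩, ?_⟩
    · rw [e] at hA
      exact isSkewSym_border.1 hA
    · rw [e] at hP
      exact hP
    · exact Subtype.ext e.symm

lemma border_mulVec_cons (x : Fin n → K) (B : Matrix (Fin n) (Fin n) K) (s : K) (v : Fin n → K) :
    border x B *ᵥ (Fin.cons s v : Fin (n + 1) → K) =
      (Fin.cons (x ⬝ᵥ v) (B *ᵥ v - s • x) : Fin (n + 1) → K) := by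
  ext i
  refine Fin.cases ?_ (fun i => ?_) i
  · simp [Matrix.mulVec, dotProduct, Fin.sum_univ_succ]
  · simp [Matrix.mulVec, dotProduct, Fin.sum_univ_succ]
    ring

lemma border_mulVec_cons_eq_zero {x : Fin n → K} {B : Matrix (Fin n) (Fin n) K} {s : K}
    {v : Fin n → K} :
    border x B *ᵥ (Fin.cons s v : Fin (n + 1) → K) = 0 ↔ x ⬝ᵥ v = 0 ∧ B *ᵥ v = s • x := by
  rw [border_mulVec_cons, funext_iff, Fin.forall_fin_succ]
  simp only [Fin.cons_zero, Fin.cons_succ, Pi.zero_apply, Pi.sub_apply, sub_eq_zero]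
  rw [← funext_iff]

lemma rank_add_finrank_ker (A : Matrix (Fin n) (Fin n) K) :
    A.rank + Module.finrank K (LinearMap.ker A.mulVecLin) = n := by
  simpa [Matrix.rank] using A.mulVecLin.finrank_range_add_finrank_ker

lemma IsSkewSym.dotProduct_mulVec_swap {B : Matrix (Fin n) (Fin n) K} (hB : IsSkewSym B)
    (u v : Fin n → K) : (B *ᵥ u) ⬝ᵥ v = -(u ⬝ᵥ B *ᵥ v) := by
  rw [Matrix.dotProduct_mulVec, ← Matrix.mulVec_transpose, hB.1, Matrix.neg_mulVec,
    neg_dotProduct, neg_neg]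

lemma IsSkewSym.mulVec_dotProduct_self {B : Matrix (Fin n) (Fin n) K} (hB : IsSkewSym B)
    (u : Fin n → K) : u ⬝ᵥ B *ᵥ u = 0 := by
  simp only [Matrix.mulVec, dotProduct, Finset.mul_sum]
  rw [← Finset.sum_product']
  refine Finset.sum_involution (fun p _ => (p.2, p.1)) ?_ ?_ ?_ ?_
  · rintro ⟨i, j⟩ -
    simp only [hB.apply_swap i j]
    ring
  · rintro ⟨i, j⟩ - h h'
    have : j = i := congrArg Prod.fst h'
    subst this
    simp [hB.2] at h
  · simp
  · simp

lemma rank_border_of_mem {x : Fin n → K} {B : Matrix (Fin n) (Fin n) K} (hB : IsSkewSym B)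
    (hx : x ∈ LinearMap.range B.mulVecLin) : (border x B).rank = B.rank := by
  obtain ⟨u, rfl⟩ := hx
  have key : ∀ s v, border (B *ᵥ u) B *ᵥ (Fin.cons s v : Fin (n + 1) → K) = 0 ↔
      B *ᵥ (v - s • u) = 0 := by
    intro s v
    rw [border_mulVec_cons_eq_zero, Matrix.mulVec_sub, Matrix.mulVec_smul, sub_eq_zero]
    refine ⟨And.right, fun h => ⟨?_, h⟩⟩
    rw [hB.dotProduct_mulVec_swap, h, dotProduct_smul, hB.mulVec_dotProduct_self]
    simp
  let f : (K × LinearMap.ker B.mulVecLin) →ₗ[K] LinearMap.ker (border (B *ᵥ u) B).mulVecLin :=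
    { toFun := fun p => ⟨Fin.cons p.1 (p.2.1 + p.1 • u), by
        have := p.2.2
        simp only [LinearMap.mem_ker, Matrix.mulVecLin_apply] at this ⊢
        rw [key]
        simpa using this⟩
      map_add' := by
        intro p p'
        ext i
        refine Fin.cases ?_ (fun i => ?_) i
        · simp
        · simp
          ring
      map_smul' := by
        intro a p
        ext i
        refine Fin.cases ?_ (fun i => ?_) i
        · simp
        · simp
          ring }
  have hf : Function.Bijective f := by
    constructor
    · rintro ⟨s, v⟩ ⟨s', v'⟩ h
      have h1 : (Fin.cons s (v.1 + s • u) : Fin (n + 1) → K) = Fin.cons s' (v'.1 + s' • u) :=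
        congrArg Subtype.val h
      obtain ⟨rfl, h2⟩ := Fin.cons_inj.1 h1
      rw [Subtype.ext (add_right_cancel h2)]
    · rintro ⟨w, hw⟩
      have e : (Fin.cons (w 0) (Fin.tail w) : Fin (n + 1) → K) = w := Fin.cons_self_tail w
      rw [LinearMap.mem_ker, Matrix.mulVecLin_apply, ← e, key] at hw
      refine ⟨(w 0, ⟨Fin.tail w - w 0 • u, hw⟩), Subtype.ext ?_⟩
      simp [f]
  have h1 := (LinearEquiv.ofBijective f hf).finrank_eq
  have h2 := rank_add_finrank_ker B
  have h3 := rank_add_finrank_ker (border (B *ᵥ u) B)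
  rw [Module.finrank_prod, Module.finrank_self] at h1
  simp only [Matrix.mulVecLin_apply]
  omega

lemma finrank_ker_add_one {V : Type} [AddCommGroup V] [Module K V] [FiniteDimensional K V]
    {φ : V →ₗ[K] K} (hφ : φ ≠ 0) :
    Module.finrank K (LinearMap.ker φ) + 1 = Module.finrank K V := by
  have h := φ.finrank_range_add_finrank_ker
  rw [LinearMap.range_eq_top.2 (LinearMap.surjective hφ), finrank_top, Module.finrank_self] at h
  omega

lemma IsSkewSym.exists_mulVec_eq_zero {x : Fin n → K} {B : Matrix (Fin n) (Fin n) K}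
    (hB : IsSkewSym B) (hx : x ∉ LinearMap.range B.mulVecLin) :
    ∃ v, B *ᵥ v = 0 ∧ x ⬝ᵥ v ≠ 0 := by
  obtain ⟨f, hfx, hf⟩ := Submodule.exists_le_ker_of_notMem hx
  have hd : ∀ w, f w = w ⬝ᵥ fun i => f fun j => if i = j then 1 else 0 := by
    intro w
    simpa [dotProduct] using LinearMap.pi_apply_eq_sum_univ f w
  refine ⟨fun i => f fun j => if i = j then 1 else 0, ?_, by rwa [← hd]⟩
  refine dotProduct_eq_zero_iff.1 fun w => ?_
  rw [dotProduct_comm, ← neg_eq_zero, ← hB.dotProduct_mulVec_swap, ← hd]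
  exact hf ⟨w, rfl⟩

lemma rank_border_of_notMem {x : Fin n → K} {B : Matrix (Fin n) (Fin n) K} (hB : IsSkewSym B)
    (hx : x ∉ LinearMap.range B.mulVecLin) : (border x B).rank = B.rank + 2 := by
  obtain ⟨v₀, hv₀, hxv₀⟩ := hB.exists_mulVec_eq_zero hx
  let φ : LinearMap.ker B.mulVecLin →ₗ[K] K :=
    (dotProductBilin K K x).comp (LinearMap.ker B.mulVecLin).subtype
  have hφ : φ ≠ 0 := fun h => hxv₀ (LinearMap.congr_fun h ⟨v₀, hv₀⟩)
  let f : LinearMap.ker φ →ₗ[K] LinearMap.ker (border x B).mulVecLin :=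
    { toFun := fun v => ⟨Fin.cons 0 v.1.1, by
        rw [LinearMap.mem_ker, Matrix.mulVecLin_apply, border_mulVec_cons_eq_zero]
        exact ⟨v.2, by rw [zero_smul]; exact v.1.2⟩⟩
      map_add' := by
        intro p p'
        ext i
        refine Fin.cases ?_ (fun i => ?_) i <;> simp
      map_smul' := by
        intro a p
        ext i
        refine Fin.cases ?_ (fun i => ?_) i <;> simp }
  have hf : Function.Bijective f := by
    constructor
    · intro v v' h
      have h1 : (Fin.cons 0 v.1.1 : Fin (n + 1) → K) = Fin.cons 0 v'.1.1 :=
        congrArg Subtype.val h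
      exact Subtype.ext (Subtype.ext (Fin.cons_inj.1 h1).2)
    · rintro ⟨w, hw⟩
      have e : (Fin.cons (w 0) (Fin.tail w) : Fin (n + 1) → K) = w := Fin.cons_self_tail w
      rw [LinearMap.mem_ker, Matrix.mulVecLin_apply, ← e, border_mulVec_cons_eq_zero] at hw
      have h0 : w 0 = 0 := by
        by_contra h0
        refine hx ⟨(w 0)⁻¹ • Fin.tail w, ?_⟩
        rw [Matrix.mulVecLin_apply, Matrix.mulVec_smul, hw.2, inv_smul_smul₀ h0]
      rw [h0, zero_smul] at hw
      refine ⟨⟨⟨Fin.tail w, hw.2⟩, hw.1⟩, Subtype.ext ?_⟩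
      rw [h0] at e
      exact e
  have h1 := (LinearEquiv.ofBijective f hf).finrank_eq
  have h2 := rank_add_finrank_ker B
  have h3 := rank_add_finrank_ker (border x B)
  have h4 := finrank_ker_add_one hφ
  omega

lemma natCard_isSkewSym_row_zero (P : Matrix (Fin n) (Fin n) K → Prop) (ρ : ℕ) :
    Nat.card {B : Matrix (Fin (n + 1)) (Fin (n + 1)) K //
        IsSkewSym B ∧ B.rank = ρ ∧ B 0 = 0 ∧ P (B.submatrix Fin.succ Fin.succ)} =
      Nat.card {C : Matrix (Fin n) (Fin n) K // IsSkewSym C ∧ C.rank = ρ ∧ P C} := by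
  rw [card_isSkewSym_succ]
  have hrow : ∀ (x : Fin n → K) (C : Matrix (Fin n) (Fin n) K), border x C 0 = 0 ↔ x = 0 := by
    intro x C
    rw [funext_iff, Fin.forall_fin_succ, funext_iff]
    simp
  symm
  refine Nat.card_eq_of_bijective (fun C => ⟨(0, C.1), C.2.1, ?_, ?_, C.2.2.2⟩) ⟨?_, ?_⟩
  · rw [rank_border_of_mem C.2.1 (zero_mem _), C.2.2.1]
  · rw [hrow]
  · intro C C' h
    exact Subtype.ext (congrArg (fun p => p.1.2) h)
  · rintro ⟨⟨x, C⟩, hC, h1, h2, h3⟩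
    rw [hrow] at h2
    subst h2
    rw [rank_border_of_mem hC (zero_mem _)] at h1
    exact ⟨⟨C, hC, h1, h3⟩, rfl⟩

end Border

section Counting

variable {K : Type} [Field K] [Fintype K]

lemma natCard_ne_add_natCard_eq {α : Type} [Finite α] {β : Type} (f : α → β) (c : β) :
    Nat.card {x // f x ≠ c} + Nat.card {x // f x = c} = Nat.card α := by
  classical
  rw [← Nat.card_congr (Equiv.sumCompl fun x => f x = c), Nat.card_sum, add_comm]

lemma natCard_functional_ne {V : Type} [AddCommGroup V] [Module K V] [Finite V]
    {φ : V →ₗ[K] K} (hφ : φ ≠ 0) (c : K) :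
    (Nat.card {x // φ x ≠ c} : ℤ) =
      ((Fintype.card K : ℤ) - 1) * (Fintype.card K : ℤ) ^ (Module.finrank K V - 1) := by
  have : FiniteDimensional K V := Module.Finite.of_finite
  obtain ⟨x₀, rfl⟩ := LinearMap.surjective hφ c
  have e : {x // φ x = φ x₀} ≃ LinearMap.ker φ :=
    (Equiv.subRight x₀).subtypeEquiv fun x => by simp [sub_eq_zero]
  have h1 := natCard_ne_add_natCard_eq φ (φ x₀)
  rw [Nat.card_congr e, Module.natCard_eq_pow_finrank (K := K) (V := LinearMap.ker φ),
    Module.natCard_eq_pow_finrank (K := K) (V := V), Nat.card_eq_fintype_card (α := K),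
    ← finrank_ker_add_one hφ] at h1
  rw [← finrank_ker_add_one hφ, Nat.add_sub_cancel]
  zify at h1
  rw [pow_succ] at h1
  linear_combination h1


open Classical in
lemma natCard_mem_range_ne {n : ℕ} {B : Matrix (Fin (n + 1)) (Fin (n + 1)) K}
    (c : K) :
    (Nat.card {x // x ∈ LinearMap.range B.mulVecLin ∧ x 0 ≠ c} : ℤ) =
      if B 0 = 0 then if c = 0 then 0 else (Fintype.card K : ℤ) ^ B.rank
      else ((Fintype.card K : ℤ) - 1) * (Fintype.card K : ℤ) ^ (B.rank - 1) := by
  let φ : LinearMap.range B.mulVecLin →ₗ[K] K :=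
    (LinearMap.proj 0).comp (LinearMap.range B.mulVecLin).subtype
  have e : Nat.card {x // x ∈ LinearMap.range B.mulVecLin ∧ x 0 ≠ c} =
      Nat.card {x // φ x ≠ c} :=
    Nat.card_congr (Equiv.subtypeSubtypeEquivSubtypeInter _ _).symm
  rw [e]
  split_ifs with h0 hc
  · have hφ : ∀ x, φ x = 0 := by
      rintro ⟨_, u, rfl⟩
      simp [φ, Matrix.mulVec, h0]
    simp [hφ, hc]
  · have hφ : ∀ x, φ x = 0 := by
      rintro ⟨_, u, rfl⟩
      simp [φ, Matrix.mulVec, h0]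
    have : ∀ x, φ x ≠ c := fun x => by rw [hφ]; exact Ne.symm hc
    rw [Nat.card_congr (Equiv.subtypeUnivEquiv this),
      Module.natCard_eq_pow_finrank (K := K), Nat.card_eq_fintype_card]
    simp [Matrix.rank]
  · refine natCard_functional_ne (fun h => h0 ?_) c
    ext j
    have := LinearMap.congr_fun h ⟨B.mulVecLin (Pi.single j 1), LinearMap.mem_range_self _ _⟩
    simpa [φ] using this

lemma natCard_mem_add_natCard_notMem {α : Type} [Finite α] (P Q : α → Prop) :
    Nat.card {x // P x ∧ Q x} + Nat.card {x // ¬ P x ∧ Q x} = Nat.card {x // Q x} := by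
  classical
  rw [← Nat.card_congr (Equiv.sumCompl fun x : {x // Q x} => P x), Nat.card_sum,
    Nat.card_congr (Equiv.subtypeSubtypeEquivSubtypeInter Q P),
    Nat.card_congr (Equiv.subtypeSubtypeEquivSubtypeInter Q fun x => ¬ P x)]
  simp only [and_comm]

open Classical in
lemma natCard_rank_border {n : ℕ} {B : Matrix (Fin (n + 1)) (Fin (n + 1)) K}
    (hB : IsSkewSym B) (c : K) (ρ : ℕ) :
    (Nat.card {x : Fin (n + 1) → K // (border x B).rank = ρ + 2 ∧ x 0 ≠ c} : ℤ) =
      (if B.rank = ρ + 2 then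
        (Nat.card {x // x ∈ LinearMap.range B.mulVecLin ∧ x 0 ≠ c} : ℤ) else 0) +
      if B.rank = ρ then ((Fintype.card K : ℤ) - 1) * (Fintype.card K : ℤ) ^ n -
        Nat.card {x // x ∈ LinearMap.range B.mulVecLin ∧ x 0 ≠ c} else 0 := by
  have hr : ∀ x : Fin (n + 1) → K, (border x B).rank = ρ + 2 ↔
      (x ∈ LinearMap.range B.mulVecLin ∧ B.rank = ρ + 2) ∨
      (x ∉ LinearMap.range B.mulVecLin ∧ B.rank = ρ) := by
    intro x
    by_cases hx : x ∈ LinearMap.range B.mulVecLin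
    · simp only [hx, rank_border_of_mem hB hx, true_and, not_true, false_and, or_false]
    · simp only [hx, rank_border_of_notMem hB hx, not_false_eq_true, true_and, false_and,
        false_or, add_left_inj]
  simp only [hr]
  by_cases h1 : B.rank = ρ + 2
  · simp [h1]
  · by_cases h2 : B.rank = ρ
    · have hp : (LinearMap.proj 0 : (Fin (n + 1) → K) →ₗ[K] K) ≠ 0 := fun h => by
        simpa using LinearMap.congr_fun h (Pi.single 0 1)
      have h3 := natCard_functional_ne hp c
      have h4 := natCard_mem_add_natCard_notMem
        (fun x : Fin (n + 1) → K => x ∈ LinearMap.range B.mulVecLin) (fun x => x 0 ≠ c)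
      simp only [LinearMap.proj_apply, Module.finrank_fin_fun, Nat.add_sub_cancel] at h3
      rw [← h3, ← h4]
      simp [h2]
    · simp [h1, h2]

lemma natCard_subtype_eq_sum {α : Type} [Fintype α] (P : α → Prop) [DecidablePred P] :
    (Nat.card {x // P x} : ℤ) = ∑ x, if P x then 1 else 0 := by
  rw [Nat.card_eq_fintype_card, Fintype.card_subtype, Finset.card_filter]
  push_cast
  rfl

open Classical in
lemma sum_natCard_mem_range_ne {n : ℕ} (c : Matrix (Fin n) (Fin n) K → K) (ρ : ℕ) :
    (∑ B : Matrix (Fin (n + 1)) (Fin (n + 1)) K, if IsSkewSym B ∧ B.rank = ρ then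
      (Nat.card {x // x ∈ LinearMap.range B.mulVecLin ∧
        x 0 ≠ c (B.submatrix Fin.succ Fin.succ)} : ℤ) else 0) =
      (Fintype.card K : ℤ) ^ ρ *
        Nat.card {C : Matrix (Fin n) (Fin n) K // IsSkewSym C ∧ C.rank = ρ ∧ c C ≠ 0} +
      ((Fintype.card K : ℤ) - 1) * (Fintype.card K : ℤ) ^ (ρ - 1) *
        ((na K ρ (n + 1) : ℤ) - na K ρ n) := by
  have h1 := natCard_isSkewSym_row_zero (fun C : Matrix (Fin n) (Fin n) K => c C ≠ 0) ρ
  have h2 := natCard_isSkewSym_row_zero (fun _ : Matrix (Fin n) (Fin n) K => True) ρ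
  simp only [and_true] at h2
  rw [na, na, ← h1, ← h2]
  simp only [natCard_subtype_eq_sum (α := Matrix (Fin (n + 1)) (Fin (n + 1)) K)]
  rw [← Finset.sum_sub_distrib, Finset.mul_sum, Finset.mul_sum, ← Finset.sum_add_distrib]
  refine Finset.sum_congr rfl fun B _ => ?_
  by_cases hB : IsSkewSym B
  · rw [natCard_mem_range_ne]
    by_cases hr : B.rank = ρ
    · subst hr
      by_cases h0 : B 0 = 0
      · by_cases hc : c (B.submatrix Fin.succ Fin.succ) = 0 <;> simp [hB, h0, hc]
      · simp [hB, h0]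
    · simp [hr]
  · simp [hB]

lemma natCard_rank_eq_add_two {n : ℕ} (c : Matrix (Fin n) (Fin n) K → K) (ρ : ℕ) :
    (Nat.card {A : Matrix (Fin (n + 2)) (Fin (n + 2)) K // IsSkewSym A ∧ A.rank = ρ + 2 ∧
      A 0 1 ≠ c ((A.submatrix Fin.succ Fin.succ).submatrix Fin.succ Fin.succ)} : ℤ) =
      (Fintype.card K : ℤ) ^ (ρ + 2) *
        Nat.card {C : Matrix (Fin n) (Fin n) K // IsSkewSym C ∧ C.rank = ρ + 2 ∧ c C ≠ 0} +
      ((Fintype.card K : ℤ) - 1) * (Fintype.card K : ℤ) ^ (ρ + 1) *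
        ((na K (ρ + 2) (n + 1) : ℤ) - na K (ρ + 2) n) +
      ((Fintype.card K : ℤ) - 1) * (Fintype.card K : ℤ) ^ n * na K ρ (n + 1) -
      (Fintype.card K : ℤ) ^ ρ *
        Nat.card {C : Matrix (Fin n) (Fin n) K // IsSkewSym C ∧ C.rank = ρ ∧ c C ≠ 0} -
      ((Fintype.card K : ℤ) - 1) * (Fintype.card K : ℤ) ^ (ρ - 1) *
        ((na K ρ (n + 1) : ℤ) - na K ρ n) := by
  classical
  have h1 := sum_natCard_mem_range_ne c (ρ + 2)
  have h2 := sum_natCard_mem_range_ne c ρ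
  have h3 : (na K ρ (n + 1) : ℤ) =
      ∑ B : Matrix (Fin (n + 1)) (Fin (n + 1)) K, if IsSkewSym B ∧ B.rank = ρ then 1 else 0 :=
    natCard_subtype_eq_sum _
  rw [show ρ + 2 - 1 = ρ + 1 from rfl] at h1
  rw [card_isSkewSym_succ, natCard_subtype_eq_sum, Fintype.sum_prod_type_right]
  trans ∑ B : Matrix (Fin (n + 1)) (Fin (n + 1)) K,
      ((if IsSkewSym B ∧ B.rank = ρ + 2 then (Nat.card {x // x ∈ LinearMap.range B.mulVecLin ∧
        x 0 ≠ c (B.submatrix Fin.succ Fin.succ)} : ℤ) else 0) +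
      ((Fintype.card K : ℤ) - 1) * (Fintype.card K : ℤ) ^ n *
        (if IsSkewSym B ∧ B.rank = ρ then 1 else 0) -
      if IsSkewSym B ∧ B.rank = ρ then (Nat.card {x // x ∈ LinearMap.range B.mulVecLin ∧
        x 0 ≠ c (B.submatrix Fin.succ Fin.succ)} : ℤ) else 0)
  · refine Finset.sum_congr rfl fun B _ => ?_
    by_cases hB : IsSkewSym B
    · have h := natCard_rank_border hB (c (B.submatrix Fin.succ Fin.succ)) ρ
      rw [natCard_subtype_eq_sum] at h
      simp only [hB, true_and]
      refine Eq.trans ?_ (h.trans ?_)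
      · rfl
      by_cases hr : B.rank = ρ <;> simp [hr]
    · simp [hB]
  · rw [Finset.sum_sub_distrib, Finset.sum_add_distrib, ← Finset.mul_sum, h1, h2, ← h3]
    ring

end Counting

lemma trace_Estd_mul_succ {K : Type} [Field K] {n : ℕ} (k : ℕ)
    {A : Matrix (Fin (n + 2)) (Fin (n + 2)) K} (hA : IsSkewSym A) :
    Matrix.trace (Estd K (k + 1) (n + 2) * A) =
      Matrix.trace (Estd K k n *
        (A.submatrix Fin.succ Fin.succ).submatrix Fin.succ Fin.succ) - 2 * A 0 1 := by
  have hE : ∀ i j : Fin n, Estd K (k + 1) (n + 2) i.succ.succ j.succ.succ = Estd K k n i j := by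
    intro i j
    simp only [Estd, Matrix.of_apply, Fin.val_succ]
    congr 1
    · apply propext
      omega
    · congr 1
      apply propext
      omega
  have h00 : Estd K (k + 1) (n + 2) 0 0 = 0 := by simp [Estd]
  have h11 : Estd K (k + 1) (n + 2) 1 1 = 0 := by simp [Estd]
  have h01 : Estd K (k + 1) (n + 2) 0 1 = 1 := by simp [Estd]; omega
  have h10 : Estd K (k + 1) (n + 2) 1 0 = -1 := by simp [Estd]; omega
  have h0 : ∀ j : Fin n, Estd K (k + 1) (n + 2) 0 j.succ.succ = 0 := by intro j; simp [Estd]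
  have h1 : ∀ j : Fin n, Estd K (k + 1) (n + 2) 1 j.succ.succ = 0 := by intro j; simp [Estd]
  have h0' : ∀ j : Fin n, Estd K (k + 1) (n + 2) j.succ.succ 0 = 0 := by intro j; simp [Estd]
  have h1' : ∀ j : Fin n, Estd K (k + 1) (n + 2) j.succ.succ 1 = 0 := by intro j; simp [Estd]
  simp only [Matrix.trace, Matrix.diag_apply, Matrix.mul_apply, Fin.sum_univ_succ,
    Fin.succ_zero_eq_one, Matrix.submatrix_apply, hE, h00, h11, h01, h10, h0, h1, h0', h1',
    hA.apply_swap 0 1, zero_mul, zero_add, Finset.sum_const_zero]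
  ring

lemma wSmall_succ {K : Type} [Field K] (hchar : ringChar K ≠ 2) (k r n : ℕ) :
    wSmall K (k + 1) r (n + 2) =
      Nat.card {A : Matrix (Fin (n + 2)) (Fin (n + 2)) K // IsSkewSym A ∧ A.rank = 2 * r ∧
        A 0 1 ≠ Matrix.trace (Estd K k n *
          (A.submatrix Fin.succ Fin.succ).submatrix Fin.succ Fin.succ) / 2} := by
  have h2 : (2 : K) ≠ 0 := Ring.two_ne_zero hchar
  refine Nat.card_congr (Equiv.subtypeEquivRight fun A => and_congr_right fun hA =>
    and_congr_right fun _ => not_congr ?_)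
  rw [trace_Estd_mul_succ k hA, sub_eq_zero, eq_div_iff h2, mul_comm, eq_comm]

theorem stmt13 (K : Type) [Field K] [Fintype K] (hchar : ringChar K ≠ 2)
    (m k r : ℕ) (hk : 1 ≤ k) (hkm : 2*k ≤ m) (hr : 1 ≤ r) (hrm : 2*r ≤ m) :
    (wSmall K k r m : ℤ) =
      (Fintype.card K : ℤ)^(2*r) * wSmall K (k-1) r (m-2)
      + ((Fintype.card K : ℤ) - 1) * (Fintype.card K : ℤ)^(2*r-1)
          * ((na K (2*r) (m-1) : ℤ) - (na K (2*r) (m-2) : ℤ))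
      + ((Fintype.card K : ℤ) - 1) * (Fintype.card K : ℤ)^(m-2)
          * (na K (2*r-2) (m-1) : ℤ)
      - (Fintype.card K : ℤ)^(2*r-2) * wSmall K (k-1) (r-1) (m-2)
      - ((Fintype.card K : ℤ) - 1) * (Fintype.card K : ℤ)^(2*r-3)
          * ((na K (2*r-2) (m-1) : ℤ) - (na K (2*r-2) (m-2) : ℤ)) := by
  obtain ⟨k, rfl⟩ := Nat.exists_eq_add_of_le' hk
  obtain ⟨r, rfl⟩ := Nat.exists_eq_add_of_le' hr
  obtain ⟨n, rfl⟩ := Nat.exists_eq_add_of_le' (show 2 ≤ m by omega)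
  have h2 : (2 : K) ≠ 0 := Ring.two_ne_zero hchar
  have h := natCard_rank_eq_add_two
    (fun C : Matrix (Fin n) (Fin n) K => Matrix.trace (Estd K k n * C) / 2) (2 * r)
  simp only [ne_eq, div_eq_zero_iff, h2, or_false] at h
  rw [wSmall_succ hchar]
  exact h
end

section
/- Let q be odd, 0 < 2t ≤ m, 0 < 2k ≤ m. Define W_{2k}(2t,m) = #{A skew-symmetric m×m of rank ≤ 2t : tr(E_{2k}A) ≠ 0} and P_m(2k,2r) = q^{2r} w_{2k-2}(2r, m-2) + (q-1)q^{2r-1}(n_a(2r,m-1) - n_a(2r,m-2)). Then W_{2k}(2t,m) = P_m(2k,2t) + (q-1)q^{m-2} N_a(2t-2, m-1), where N_a(2s,m) = ∑_{r=0}^{s} n_a(2r,m). -/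
open Matrix
namespace IsSkewSym

variable {K : Type} [Field K] {n : ℕ}

/-- The skew-symmetric matrix obtained from `B` by adding the first row `(0, u)`. -/
def border (B : Matrix (Fin n) (Fin n) K) (u : Fin n → K) :
    Matrix (Fin (n + 1)) (Fin (n + 1)) K :=
  Matrix.of (Fin.cons (Fin.cons 0 u) fun i => Fin.cons (-u i) (B i))

@[simp] lemma border_zero_zero (B : Matrix (Fin n) (Fin n) K) (u : Fin n → K) :
    border B u 0 0 = 0 := rfl

@[simp] lemma border_zero_succ (B : Matrix (Fin n) (Fin n) K) (u : Fin n → K) (j : Fin n) :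
    border B u 0 j.succ = u j := rfl

@[simp] lemma border_succ_zero (B : Matrix (Fin n) (Fin n) K) (u : Fin n → K) (i : Fin n) :
    border B u i.succ 0 = -u i := rfl

@[simp] lemma border_succ_succ (B : Matrix (Fin n) (Fin n) K) (u : Fin n → K) (i j : Fin n) :
    border B u i.succ j.succ = B i j := rfl

lemma apply_swap_s14 {A : Matrix (Fin n) (Fin n) K} (hA : IsSkewSym A) (i j : Fin n) :
    A j i = -A i j := congrFun (congrFun hA.1 i) j

lemma border_isSkewSym {B : Matrix (Fin n) (Fin n) K} (hB : IsSkewSym B) (u : Fin n → K) :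
    IsSkewSym (border B u) := by
  constructor
  · ext i j
    cases i using Fin.cases <;> cases j using Fin.cases <;> simp
    exact hB.apply_swap_s14 _ _
  · intro i
    cases i using Fin.cases <;> simp [hB.2]

lemma submatrix_succ {A : Matrix (Fin (n + 1)) (Fin (n + 1)) K} (hA : IsSkewSym A) :
    IsSkewSym (A.submatrix Fin.succ Fin.succ) := by
  constructor
  · ext i j
    simp [hA.apply_swap_s14 i.succ j.succ]
  · intro i
    simp [hA.2]

lemma border_submatrix {A : Matrix (Fin (n + 1)) (Fin (n + 1)) K} (hA : IsSkewSym A) :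
    border (A.submatrix Fin.succ Fin.succ) (fun j => A 0 j.succ) = A := by
  ext i j
  cases i using Fin.cases <;> cases j using Fin.cases <;>
    simp [hA.2, hA.apply_swap_s14 0 (Fin.succ _)]

/-- Skew-symmetric matrices of size `n + 1` are bordered skew-symmetric matrices of size `n`. -/
def borderEquiv (P : Matrix (Fin (n + 1)) (Fin (n + 1)) K → Prop) :
    {A : Matrix (Fin (n + 1)) (Fin (n + 1)) K // IsSkewSym A ∧ P A} ≃
      Σ B : {B : Matrix (Fin n) (Fin n) K // IsSkewSym B}, {u : Fin n → K // P (border B.1 u)} where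
  toFun A := ⟨⟨_, A.2.1.submatrix_succ⟩, ⟨fun j => A.1 0 j.succ, by
    rw [A.2.1.border_submatrix]; exact A.2.2⟩⟩
  invFun x := ⟨border x.1.1 x.2.1, border_isSkewSym x.1.2 _, x.2.2⟩
  left_inv A := Subtype.ext A.2.1.border_submatrix
  right_inv _ := rfl

/-- Skew-symmetric matrices with vanishing first row come from matrices of smaller size. -/
lemma card_border_zero (P : Matrix (Fin (n + 1)) (Fin (n + 1)) K → Prop) :
    Nat.card {A : Matrix (Fin (n + 1)) (Fin (n + 1)) K // IsSkewSym A ∧ A 0 = 0 ∧ P A} =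
      Nat.card {B : Matrix (Fin n) (Fin n) K // IsSkewSym B ∧ P (border B 0)} := by
  have key : ∀ {A : Matrix (Fin (n + 1)) (Fin (n + 1)) K}, IsSkewSym A → A 0 = 0 →
      border (A.submatrix Fin.succ Fin.succ) 0 = A := by
    intro A hA h0
    have h : (0 : Fin n → K) = fun j => A 0 j.succ := by ext j; simp [h0]
    rw [h, hA.border_submatrix]
  refine Nat.card_congr
    { toFun := fun A => ⟨_, A.2.1.submatrix_succ, by rw [key A.2.1 A.2.2.1]; exact A.2.2.2⟩
      invFun := fun B => ⟨border B.1 0, border_isSkewSym B.2.1 0, ?_, B.2.2⟩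
      left_inv := fun A => Subtype.ext (key A.2.1 A.2.2.1)
      right_inv := fun _ => rfl }
  ext j
  cases j using Fin.cases <;> simp

lemma finrank_span_cons {N : ℕ} {V : Type} [AddCommGroup V] [Module K V] [FiniteDimensional K V]
    (c : V) (f : Fin N → V) [Decidable (c ∈ Submodule.span K (Set.range f))] :
    Module.finrank K (Submodule.span K (Set.range (Fin.cons c f : Fin (N + 1) → V))) =
      Module.finrank K (Submodule.span K (Set.range f)) +
        if c ∈ Submodule.span K (Set.range f) then 0 else 1 := by
  rw [Fin.range_cons, Submodule.span_insert]
  split_ifs with h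
  · rw [sup_eq_right.2 ((Submodule.span_singleton_le_iff_mem _ _).2 h), add_zero]
  · rw [sup_comm]
    exact Submodule.finrank_sup_span_singleton h

lemma mem_span_cols {N M : ℕ} (A : Matrix (Fin N) (Fin M) K) (u : Fin N → K) :
    u ∈ Submodule.span K (Set.range A.col) ↔ u ∈ LinearMap.range A.mulVecLin := by
  rw [Matrix.range_mulVecLin]

lemma mem_span_row {B : Matrix (Fin n) (Fin n) K} (hB : IsSkewSym B) (u : Fin n → K) :
    u ∈ Submodule.span K (Set.range B.row) ↔ u ∈ LinearMap.range B.mulVecLin := by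
  have h : B.row = (-B).col := by rw [← hB.1]; rfl
  rw [h, mem_span_cols]
  constructor
  · rintro ⟨x, rfl⟩
    exact ⟨-x, by simp [Matrix.mulVec_neg]⟩
  · rintro ⟨x, rfl⟩
    exact ⟨-x, by simp [Matrix.mulVec_neg]⟩

lemma dotProduct_mulVec_self {B : Matrix (Fin n) (Fin n) K} (hB : IsSkewSym B) (x : Fin n → K) :
    x ⬝ᵥ (B *ᵥ x) = 0 := by
  induction n with
  | zero => simp
  | succ n ih =>
    have h := ih hB.submatrix_succ (fun i => x i.succ)
    simp only [dotProduct, Matrix.mulVec, Matrix.submatrix_apply, Finset.mul_sum] at h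
    simp only [dotProduct, Matrix.mulVec, Fin.sum_univ_succ, mul_add, Finset.sum_add_distrib, Finset.mul_sum,
      h, hB.2, hB.apply_swap_s14 0 (Fin.succ _)]
    simp only [zero_mul, mul_zero, zero_add, add_zero, ← Finset.sum_add_distrib]
    exact Finset.sum_eq_zero fun i _ => by ring

open Classical in
/-- Bordering by `u` keeps the rank if `u` is in the column space and raises it by `2` otherwise. -/
lemma rank_border {B : Matrix (Fin n) (Fin n) K} (hB : IsSkewSym B) (u : Fin n → K) :
    (border B u).rank = B.rank + if u ∈ LinearMap.range B.mulVecLin then 0 else 2 := by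
  let M : Matrix (Fin (n + 1)) (Fin n) K := Matrix.of (Fin.cons u B)
  have hM : M.rank = B.rank + if u ∈ LinearMap.range B.mulVecLin then 0 else 1 := by
    rw [Matrix.rank_eq_finrank_span_row, Matrix.rank_eq_finrank_span_row,
      ← if_congr (hB.mem_span_row u) rfl rfl]
    exact finrank_span_cons u B.row
  have hmem : (Fin.cons 0 (-u) : Fin (n + 1) → K) ∈ LinearMap.range M.mulVecLin ↔
      u ∈ LinearMap.range B.mulVecLin := by
    constructor
    · rintro ⟨y, hy⟩
      refine ⟨-y, ?_⟩
      ext i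
      have := congrFun hy i.succ
      have h2 : (B *ᵥ y) i = -u i := this
      simp [Matrix.mulVec_neg, h2]
    · rintro ⟨y, rfl⟩
      refine ⟨-y, ?_⟩
      ext i
      cases i using Fin.cases with
      | zero =>
        have h : (B *ᵥ y) ⬝ᵥ (-y) = 0 := by
          rw [dotProduct_comm, neg_dotProduct, hB.dotProduct_mulVec_self, neg_zero]
        exact h
      | succ i =>
        have h : (B *ᵥ (-y)) i = -(B *ᵥ y) i := by simp [Matrix.mulVec_neg]
        exact h
  have hA : (border B u).rank =
      M.rank + if u ∈ LinearMap.range B.mulVecLin then 0 else 1 := by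
    rw [Matrix.rank_eq_finrank_span_cols, Matrix.rank_eq_finrank_span_cols, ← if_congr hmem rfl rfl,
      ← if_congr (mem_span_cols M _) rfl rfl]
    have h : (border B u).col = Fin.cons (Fin.cons 0 (-u)) M.col := by
      ext j i
      cases j using Fin.cases <;> cases i using Fin.cases <;> rfl
    rw [h]
    exact finrank_span_cons _ _
  rw [hA, hM]
  split_ifs <;> rfl

lemma even_rank {A : Matrix (Fin n) (Fin n) K} (hA : IsSkewSym A) : Even A.rank := by
  classical
  induction n with
  | zero => simp [Nat.le_zero.1 A.rank_le_width]
  | succ n ih =>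
    rw [← hA.border_submatrix, rank_border hA.submatrix_succ]
    refine (ih hA.submatrix_succ).add ?_
    split_ifs <;> simp

lemma trace_Estd_mul (k : ℕ) (hk : 0 < k) {A : Matrix (Fin (n + 1)) (Fin (n + 1)) K}
    (u : Fin (n + 1) → K) :
    Matrix.trace (Estd K k (n + 2) * border A u) =
      -2 * u 0 + Matrix.trace (Estd K (k - 1) n * A.submatrix Fin.succ Fin.succ) := by
  have h00 : Estd K k (n + 2) 0 0 = 0 := by simp [Estd]
  have h01 : Estd K k (n + 2) 0 (Fin.succ 0) = 1 := by simp [Estd]; omega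
  have h10 : Estd K k (n + 2) (Fin.succ 0) 0 = -1 := by simp [Estd]; omega
  have h11 : Estd K k (n + 2) (Fin.succ 0) (Fin.succ 0) = 0 := by simp [Estd]
  have h0 (j : Fin n) : Estd K k (n + 2) 0 j.succ.succ = 0 := by simp [Estd]
  have h1 (j : Fin n) : Estd K k (n + 2) (Fin.succ 0) j.succ.succ = 0 := by simp [Estd]
  have h0' (j : Fin n) : Estd K k (n + 2) j.succ.succ 0 = 0 := by simp [Estd]
  have h1' (j : Fin n) : Estd K k (n + 2) j.succ.succ (Fin.succ 0) = 0 := by simp [Estd]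
  have hs (i j : Fin n) : Estd K k (n + 2) i.succ.succ j.succ.succ = Estd K (k - 1) n i j := by
    have e (a : ℕ) : a + 1 + 1 < 2 * k ↔ a < 2 * (k - 1) := by omega
    simp [Estd, e, Nat.add_mod_right, add_assoc]
  simp only [Matrix.trace, Matrix.diag, Matrix.mul_apply, Fin.sum_univ_succ, h00, h01, h10, h11,
    h0, h1, h0', h1', hs, Matrix.submatrix_apply, border_zero_succ, border_succ_zero,
    border_succ_succ]
  simp
  ring

lemma card_range {B : Matrix (Fin n) (Fin n) K} (P : (Fin n → K) → Prop) :
    Nat.card {u : Fin n → K // u ∈ LinearMap.range B.mulVecLin ∧ P u} =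
      Nat.card {v : LinearMap.range B.mulVecLin // P v.1} :=
  Nat.card_congr (Equiv.subtypeSubtypeEquivSubtypeInter _ _).symm

section Count

variable [Fintype K]

lemma card_add_ne_zero {V : Type} [AddCommGroup V] [Module K V] [FiniteDimensional K V]
    {φ : V →ₗ[K] K} (hφ : φ ≠ 0) (c : K) :
    (Nat.card {v : V // φ v + c ≠ 0} : ℤ) =
      ((Fintype.card K : ℤ) - 1) * (Fintype.card K : ℤ) ^ (Module.finrank K V - 1) := by
  classical
  have : Finite V := Module.finite_of_finite K
  obtain ⟨v₀, hv₀⟩ := LinearMap.surjective hφ (-c)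
  have hfib : Nat.card {v : V // φ v + c = 0} = Nat.card (LinearMap.ker φ) :=
    Nat.card_congr
      { toFun := fun v => ⟨v.1 - v₀, by
          rw [LinearMap.mem_ker, map_sub, hv₀, sub_neg_eq_add, v.2]⟩
        invFun := fun v => ⟨v.1 + v₀, by
          rw [map_add, hv₀, LinearMap.mem_ker.1 v.2]; ring⟩
        left_inv := fun v => by simp
        right_inv := fun v => by simp }
  have hrn := φ.finrank_range_add_finrank_ker
  rw [LinearMap.range_eq_top.2 (LinearMap.surjective hφ), finrank_top, Module.finrank_self] at hrn
  have hsum : Nat.card V = Nat.card {v : V // φ v + c = 0} + Nat.card {v : V // φ v + c ≠ 0} := by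
    rw [← Nat.card_sum]
    exact Nat.card_congr (Equiv.sumCompl _).symm
  rw [hfib, Module.natCard_eq_pow_finrank (K := K),
    Module.natCard_eq_pow_finrank (K := K) (V := LinearMap.ker φ), ← hrn, Nat.card_eq_fintype_card] at hsum
  rw [← hrn, Nat.add_sub_cancel_left]
  zify at hsum
  rw [pow_add] at hsum
  linarith

open Classical in
/-- The number of borders of `B` of rank at most `2 * t` with `a * u 0 + c ≠ 0`. -/
lemma card_borders {B : Matrix (Fin (n + 1)) (Fin (n + 1)) K} (hB : IsSkewSym B) {t : ℕ}
    (ht : 0 < t) {a : K} (ha : a ≠ 0) (c : K) :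
    (Nat.card {u : Fin (n + 1) → K // (border B u).rank ≤ 2 * t ∧ a * u 0 + c ≠ 0} : ℤ) =
      ((Fintype.card K : ℤ) ^ (2 * t) * (if B 0 = 0 ∧ B.rank = 2 * t ∧ c ≠ 0 then 1 else 0) +
        ((Fintype.card K : ℤ) - 1) * (Fintype.card K : ℤ) ^ (2 * t - 1) *
          ((if B.rank = 2 * t then 1 else 0) - if B 0 = 0 ∧ B.rank = 2 * t then 1 else 0)) +
      ((Fintype.card K : ℤ) - 1) * (Fintype.card K : ℤ) ^ n *
        (if B.rank ≤ 2 * t - 2 then 1 else 0) := by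
  obtain ⟨s, hs⟩ := hB.even_rank
  have hrk := hB.rank_border
  rcases lt_trichotomy s t with h | h | h
  · have h1 : B.rank ≤ 2 * t - 2 := by omega
    have h2 : B.rank ≠ 2 * t := by omega
    have hP (u : Fin (n + 1) → K) : (border B u).rank ≤ 2 * t := by
      rw [hrk]; split_ifs <;> omega
    have hφ : a • LinearMap.proj (R := K) (φ := fun _ : Fin (n + 1) => K) 0 ≠ 0 := by
      intro h0
      have := LinearMap.congr_fun h0 1
      simp at this
      exact ha this
    have := card_add_ne_zero hφ c
    simp only [LinearMap.smul_apply, LinearMap.proj_apply, smul_eq_mul, Module.finrank_fin_fun,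
      Nat.add_sub_cancel] at this
    simp only [hP, true_and, this, h1, h2, if_true, and_false, false_and, if_false]
    ring
  · have h1 : ¬ B.rank ≤ 2 * t - 2 := by omega
    have h2 : B.rank = 2 * t := by omega
    have hP (u : Fin (n + 1) → K) : (border B u).rank ≤ 2 * t ↔
        u ∈ LinearMap.range B.mulVecLin := by
      rw [hrk]; split_ifs with h <;> simp [h] <;> omega
    rw [if_neg h1]
    simp only [hP, h2, if_true, true_and]
    rw [card_range]
    let φ : LinearMap.range B.mulVecLin →ₗ[K] K :=
      (a • LinearMap.proj (R := K) (φ := fun _ : Fin (n + 1) => K) 0) ∘ₗ Submodule.subtype _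
    have hφ : φ = 0 ↔ B 0 = 0 := by
      constructor
      · intro h0
        ext j
        have := LinearMap.congr_fun h0 ⟨B.mulVecLin (Pi.single j 1), ⟨_, rfl⟩⟩
        simpa [φ, ha] using this
      · intro h0
        ext ⟨_, x, rfl⟩
        simp [φ, Matrix.mulVec, h0]
    have hfr : Module.finrank K (LinearMap.range B.mulVecLin) = 2 * t := h2
    by_cases h0 : B 0 = 0
    · have hz (v : LinearMap.range B.mulVecLin) : a * v.1 0 = 0 := LinearMap.congr_fun (hφ.2 h0) v
      by_cases hc : c = 0
      · simp [h0, hc, hz]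
      · have hcard := Module.natCard_eq_pow_finrank (K := K) (V := LinearMap.range B.mulVecLin)
        rw [hfr, Nat.card_eq_fintype_card (α := K)] at hcard
        simp only [hz, zero_add, h0, hc, ne_eq, not_false_eq_true, if_true, true_and]
        rw [Nat.card_congr (Equiv.subtypeUnivEquiv fun _ => trivial), hcard]
        simp
    · have := card_add_ne_zero (mt hφ.1 h0) c
      rw [hfr] at this
      simp only [h0, false_and, if_false]
      rw [show Nat.card {v : LinearMap.range B.mulVecLin // a * v.1 0 + c ≠ 0} =
        Nat.card {v // φ v + c ≠ 0} from rfl, this]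
      ring
  · have h1 : ¬ B.rank ≤ 2 * t - 2 := by omega
    have h2 : B.rank ≠ 2 * t := by omega
    have hP (u : Fin (n + 1) → K) : ¬ (border B u).rank ≤ 2 * t := by
      rw [hrk]; split_ifs <;> omega
    simp [h1, h2, hP]

open Classical in
lemma sum_ite_eq_card (P : Matrix (Fin n) (Fin n) K → Prop) :
    (∑ B : {B : Matrix (Fin n) (Fin n) K // IsSkewSym B}, if P B.1 then (1 : ℤ) else 0) =
      Nat.card {B : Matrix (Fin n) (Fin n) K // IsSkewSym B ∧ P B} := by
  rw [Finset.sum_boole, ← Fintype.card_subtype, ← Nat.card_eq_fintype_card,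
    Nat.card_congr (Equiv.subtypeSubtypeEquivSubtypeInter _ P)]

end Count

end IsSkewSym

theorem stmt14 (K : Type) [Field K] [Fintype K] (hchar : ringChar K ≠ 2)
    (m k t : ℕ) (ht : 0 < t) (htm : 2*t ≤ m) (hk : 0 < k) (hkm : 2*k ≤ m) :
    (Wcap K k t m : ℤ) =
      ((Fintype.card K : ℤ)^(2*t) * wSmall K (k-1) t (m-2)
        + ((Fintype.card K : ℤ) - 1) * (Fintype.card K : ℤ)^(2*t-1)
            * ((na K (2*t) (m-1) : ℤ) - (na K (2*t) (m-2) : ℤ)))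
      + ((Fintype.card K : ℤ) - 1) * (Fintype.card K : ℤ)^(m-2)
          * (Na K (2*t-2) (m-1) : ℤ) := by
  classical
  obtain ⟨n, rfl⟩ : ∃ n, m = n + 2 := ⟨m - 2, by omega⟩
  have h2 : (-2 : K) ≠ 0 := neg_ne_zero.2 (Ring.two_ne_zero hchar)
  have hr (B : Matrix (Fin n) (Fin n) K) (hB : IsSkewSym B) :
      (IsSkewSym.border B 0).rank = B.rank := by
    rw [hB.rank_border, if_pos (Submodule.zero_mem _), add_zero]
  have hna : na K (2 * t) n = Nat.card {A : Matrix (Fin (n + 1)) (Fin (n + 1)) K //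
      IsSkewSym A ∧ A 0 = 0 ∧ A.rank = 2 * t} := by
    rw [IsSkewSym.card_border_zero]
    exact Nat.card_congr (Equiv.subtypeEquivRight fun B =>
      and_congr_right fun hB => by rw [hr B hB])
  have hw : wSmall K (k - 1) t n = Nat.card {A : Matrix (Fin (n + 1)) (Fin (n + 1)) K //
      IsSkewSym A ∧ A 0 = 0 ∧ A.rank = 2 * t ∧
        Matrix.trace (Estd K (k - 1) n * A.submatrix Fin.succ Fin.succ) ≠ 0} := by
    rw [IsSkewSym.card_border_zero]
    exact Nat.card_congr (Equiv.subtypeEquivRight fun B =>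
      and_congr_right fun hB => by rw [hr B hB]; rfl)
  have hW : (Wcap K k t (n + 2) : ℤ) =
      ∑ B : {B : Matrix (Fin (n + 1)) (Fin (n + 1)) K // IsSkewSym B},
        (Nat.card {u : Fin (n + 1) → K // (IsSkewSym.border B.1 u).rank ≤ 2 * t ∧
          -2 * u 0 + Matrix.trace (Estd K (k - 1) n * B.1.submatrix Fin.succ Fin.succ) ≠ 0} : ℤ) := by
    rw [Wcap, Nat.card_congr (IsSkewSym.borderEquiv _), Nat.card_sigma]
    simp only [IsSkewSym.trace_Estd_mul k hk, Nat.cast_sum]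
  rw [hW, Finset.sum_congr rfl fun B _ => B.2.card_borders ht h2 _]
  simp only [Nat.add_sub_cancel, show n + 2 - 1 = n + 1 from rfl]
  rw [hna, hw, na, Na]
  simp only [← IsSkewSym.sum_ite_eq_card, Finset.mul_sum, ← Finset.sum_sub_distrib,
    ← Finset.sum_add_distrib]
  congr!
end

section
/- Let q be odd, 0 < 2t ≤ m, 1 ≤ k ≤ ⌊m/2⌋. Then W_{2k}(2t,m) - W_2(2t,m) = q^{2t} · w_{2k-2}(2t, m-2), where W_{2k}(2t,m) = #{A skew-symmetric m×m of rank ≤ 2t : tr(E_{2k}A) ≠ 0} and w_{2j}(2r, m') = #{A skew-symmetric m'×m' of rank exactly 2r : tr(E_{2j}A) ≠ 0}. In particular W_{2k}(2t,m) ≥ W_2(2t,m) for all k. -/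
open Matrix
namespace SkewBorder

variable {K : Type} [Field K] {n : ℕ}

/-- The skew-symmetric bordering of `D` by a new first row `w`. -/
def border (w : Fin n → K) (D : Matrix (Fin n) (Fin n) K) :
    Matrix (Fin (n + 1)) (Fin (n + 1)) K :=
  Matrix.of (Fin.cons (Fin.cons 0 w) fun i => Fin.cons (-w i) (D i))

@[simp] lemma border_zero_zero (w : Fin n → K) (D : Matrix (Fin n) (Fin n) K) :
    border w D 0 0 = 0 := rfl

@[simp] lemma border_zero_succ (w : Fin n → K) (D : Matrix (Fin n) (Fin n) K) (j : Fin n) :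
    border w D 0 j.succ = w j := rfl

@[simp] lemma border_succ_zero (w : Fin n → K) (D : Matrix (Fin n) (Fin n) K) (i : Fin n) :
    border w D i.succ 0 = -w i := rfl

@[simp] lemma border_succ_succ (w : Fin n → K) (D : Matrix (Fin n) (Fin n) K) (i j : Fin n) :
    border w D i.succ j.succ = D i j := rfl

lemma isSkewSym_apply {A : Matrix (Fin n) (Fin n) K} (hA : IsSkewSym A) (i j : Fin n) :
    A j i = -A i j := congrFun (congrFun hA.1 i) j

lemma isSkewSym_border {w : Fin n → K} {D : Matrix (Fin n) (Fin n) K} (hD : IsSkewSym D) :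
    IsSkewSym (border w D) := by
  constructor
  · ext i j
    refine Fin.cases ?_ (fun i => ?_) i <;> refine Fin.cases ?_ (fun j => ?_) j <;> simp
    exact isSkewSym_apply hD i j
  · intro i
    refine Fin.cases ?_ (fun i => ?_) i
    · simp
    · simpa using hD.2 i

lemma isSkewSym_submatrix_succ {A : Matrix (Fin (n + 1)) (Fin (n + 1)) K} (hA : IsSkewSym A) :
    IsSkewSym (A.submatrix Fin.succ Fin.succ) :=
  ⟨by ext i j; exact isSkewSym_apply hA i.succ j.succ, fun i => hA.2 i.succ⟩

lemma border_submatrix_succ {A : Matrix (Fin (n + 1)) (Fin (n + 1)) K} (hA : IsSkewSym A) :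
    border (fun j => A 0 j.succ) (A.submatrix Fin.succ Fin.succ) = A := by
  ext i j
  refine Fin.cases ?_ (fun i => ?_) i <;> refine Fin.cases ?_ (fun j => ?_) j <;> simp
  · exact (hA.2 0).symm
  · exact (isSkewSym_apply hA 0 i.succ).symm

lemma rank_add_le {m n : Type} [Fintype m] [Fintype n] (A B : Matrix m n K) :
    (A + B).rank ≤ A.rank + B.rank := by
  classical
  unfold Matrix.rank
  rw [Matrix.mulVecLin_add]
  exact (Submodule.finrank_mono (LinearMap.range_add_le _ _)).trans
    (Submodule.finrank_add_le_finrank_add_finrank _ _)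

lemma rank_succ_le_of_first_col_notMem {p q : ℕ} (N : Matrix (Fin p) (Fin (q + 1)) K)
    (h : ∀ x, N.submatrix id Fin.succ *ᵥ x ≠ fun i => N i 0) :
    (N.submatrix id Fin.succ).rank + 1 ≤ N.rank := by
  have hle : LinearMap.range (N.submatrix id Fin.succ).mulVecLin ≤ LinearMap.range N.mulVecLin := by
    rintro _ ⟨x, rfl⟩
    refine ⟨Fin.cons 0 x, ?_⟩
    ext i
    simp [Matrix.mulVec, dotProduct, Fin.sum_univ_succ]
  refine Submodule.finrank_lt_finrank_of_lt (lt_of_le_of_ne hle fun heq => ?_)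
  have hmem : (fun i => N i 0) ∈ LinearMap.range N.mulVecLin := by
    refine ⟨Pi.single 0 1, ?_⟩
    ext i
    simp
  rw [← heq] at hmem
  obtain ⟨x, hx⟩ := hmem
  exact h x hx

lemma rank_border_ge {w : Fin n → K} {D : Matrix (Fin n) (Fin n) K} (hD : IsSkewSym D)
    (h : ∀ x, D *ᵥ x ≠ w) : D.rank + 2 ≤ (border w D).rank := by
  have h1 := rank_succ_le_of_first_col_notMem (border w D) fun x hx => h (-x) (by
    ext i
    have := congrFun hx i.succ
    simp only [border_succ_zero] at this
    rw [Matrix.mulVec_neg, Pi.neg_apply, ← neg_neg (w i), ← this]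
    rfl)
  have hT : (((border w D).submatrix id Fin.succ)ᵀ).submatrix id Fin.succ = -D := by
    ext i j
    exact isSkewSym_apply hD i j
  have h2 := rank_succ_le_of_first_col_notMem ((border w D).submatrix id Fin.succ)ᵀ
    fun x hx => h (-x) (by
      rw [hT, Matrix.neg_mulVec] at hx
      rw [Matrix.mulVec_neg, hx]
      rfl)
  rw [hT, Matrix.rank_transpose, ← Matrix.rank_transpose, Matrix.transpose_neg, hD.1, neg_neg] at h2
  omega

lemma dotProduct_mulVec_self {D : Matrix (Fin n) (Fin n) K} (hD : IsSkewSym D) (x : Fin n → K) :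
    x ⬝ᵥ D *ᵥ x = 0 := by
  induction n with
  | zero => simp
  | succ n ih =>
    have h := ih (isSkewSym_submatrix_succ hD) (fun i => x i.succ)
    simp only [dotProduct, Matrix.mulVec, Matrix.submatrix_apply] at h
    simp only [dotProduct, Matrix.mulVec, Fin.sum_univ_succ, hD.2, mul_add, Finset.sum_add_distrib,
      h]
    rw [zero_mul, mul_zero, zero_add, add_zero, Finset.mul_sum, ← Finset.sum_add_distrib]
    refine Finset.sum_eq_zero fun i _ => ?_
    rw [isSkewSym_apply hD 0 i.succ]
    ring

lemma vecMul_eq_neg_mulVec {D : Matrix (Fin n) (Fin n) K} (hD : IsSkewSym D) (x : Fin n → K) :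
    x ᵥ* D = -(D *ᵥ x) := by
  rw [← Matrix.mulVec_transpose, hD.1, Matrix.neg_mulVec]

lemma rank_border_mulVec_le {D : Matrix (Fin n) (Fin n) K} (hD : IsSkewSym D) (x : Fin n → K) :
    (border (D *ᵥ x) D).rank ≤ D.rank := by
  let Q : Matrix (Fin (n + 1)) (Fin n) K := Matrix.of (Fin.cons (-x) (1 : Matrix (Fin n) (Fin n) K))
  have hQ : border (D *ᵥ x) D = Q * (D * Qᵀ) := by
    have h0 : Q 0 = -x := rfl
    have hs : ∀ i, Q (Fin.succ i) = (1 : Matrix (Fin n) (Fin n) K) i := fun i => rfl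
    have hone : ∀ (i : Fin n) (v : Fin n → K), (1 : Matrix (Fin n) (Fin n) K) i ⬝ᵥ v = v i :=
      fun i v => congrFun (Matrix.one_mulVec v) i
    have hone' : ∀ (i : Fin n) (v : Fin n → K), v ⬝ᵥ (1 : Matrix (Fin n) (Fin n) K) i = v i :=
      fun i v => by rw [dotProduct_comm, hone]
    have key : ∀ i j, (Q * (D * Qᵀ)) i j = Q i ⬝ᵥ D *ᵥ Q j := fun i j => by
      simp only [Matrix.mul_apply, dotProduct, Matrix.mulVec, Matrix.transpose_apply]
    ext i j
    rw [key]
    refine Fin.cases ?_ (fun i => ?_) i <;> refine Fin.cases ?_ (fun j => ?_) j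
    · simp [h0, Matrix.mulVec_neg, dotProduct_mulVec_self hD]
    · rw [h0, hs, Matrix.dotProduct_mulVec, hone', vecMul_eq_neg_mulVec hD]
      simp [Matrix.mulVec_neg]
    · rw [h0, hs, hone]
      simp [Matrix.mulVec_neg]
    · rw [hs, hs, hone, border_succ_succ]
      exact (hone' j (D i)).symm
  rw [hQ]
  exact (Matrix.rank_mul_le_right _ _).trans (Matrix.rank_mul_le_left _ _)

lemma rank_le_rank_border (w : Fin n → K) (D : Matrix (Fin n) (Fin n) K) :
    D.rank ≤ (border w D).rank :=
  (border w D).rank_submatrix_le Fin.succ Fin.succ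

lemma border_eq_add (w : Fin n → K) (D : Matrix (Fin n) (Fin n) K) :
    border w D = Matrix.vecMulVec (Pi.single 0 1) (Fin.cons 0 w : Fin (n + 1) → K) +
      Matrix.vecMulVec (Fin.cons 0 (-w) : Fin (n + 1) → K) (Pi.single 0 1) + border 0 D := by
  ext i j
  refine Fin.cases ?_ (fun i => ?_) i <;> refine Fin.cases ?_ (fun j => ?_) j <;>
    simp [Matrix.vecMulVec_apply]

lemma rank_border_zero_le {D : Matrix (Fin n) (Fin n) K} (hD : IsSkewSym D) :
    (border 0 D).rank ≤ D.rank := by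
  simpa using rank_border_mulVec_le hD 0

lemma rank_border_le {D : Matrix (Fin n) (Fin n) K} (hD : IsSkewSym D) (w : Fin n → K) :
    (border w D).rank ≤ D.rank + 2 := by
  rw [border_eq_add]
  have h1 := Matrix.rank_vecMulVec_le (Pi.single 0 1 : Fin (n + 1) → K) (Fin.cons 0 w : Fin (n + 1) → K)
  have h2 := Matrix.rank_vecMulVec_le (Fin.cons 0 (-w) : Fin (n + 1) → K)
    (Pi.single 0 1 : Fin (n + 1) → K)
  have h3 := rank_border_zero_le hD
  grw [rank_add_le, rank_add_le]
  omega

lemma even_rank {A : Matrix (Fin n) (Fin n) K} (hA : IsSkewSym A) : Even A.rank := by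
  induction n with
  | zero => simp [Nat.le_zero.1 A.rank_le_width]
  | succ n ih =>
    have hD := isSkewSym_submatrix_succ hA
    have hev := ih hD
    rw [← border_submatrix_succ hA]
    set D := A.submatrix Fin.succ Fin.succ
    set w := fun j : Fin n => A 0 j.succ
    by_cases h : ∃ x, D *ᵥ x = w
    · obtain ⟨x, hx⟩ := h
      rw [← hx, (rank_border_mulVec_le hD x).antisymm (rank_le_rank_border _ _)]
      exact hev
    · push Not at h
      rw [(rank_border_le hD w).antisymm (rank_border_ge hD h)]
      exact hev.add even_two

/-- Two-step bordering: rows `(0, a, u)` and `(-a, 0, v)` above the block `C`. -/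
def border₂ (a : K) (u v : Fin n → K) (C : Matrix (Fin n) (Fin n) K) :
    Matrix (Fin (n + 2)) (Fin (n + 2)) K :=
  border (Fin.cons a u : Fin (n + 1) → K) (border v C)

@[simp] lemma border₂_zero_zero (a : K) (u v : Fin n → K) (C : Matrix (Fin n) (Fin n) K) :
    border₂ a u v C 0 0 = 0 := rfl

@[simp] lemma border₂_zero_one (a : K) (u v : Fin n → K) (C : Matrix (Fin n) (Fin n) K) :
    border₂ a u v C 0 1 = a := rfl

@[simp] lemma border₂_zero_succ (a : K) (u v : Fin n → K) (C : Matrix (Fin n) (Fin n) K) (j : Fin n) :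
    border₂ a u v C 0 j.succ.succ = u j := rfl

@[simp] lemma border₂_one_zero (a : K) (u v : Fin n → K) (C : Matrix (Fin n) (Fin n) K) :
    border₂ a u v C 1 0 = -a := rfl

@[simp] lemma border₂_one_one (a : K) (u v : Fin n → K) (C : Matrix (Fin n) (Fin n) K) :
    border₂ a u v C 1 1 = 0 := rfl

@[simp] lemma border₂_one_succ (a : K) (u v : Fin n → K) (C : Matrix (Fin n) (Fin n) K) (j : Fin n) :
    border₂ a u v C 1 j.succ.succ = v j := rfl

@[simp] lemma border₂_succ_zero (a : K) (u v : Fin n → K) (C : Matrix (Fin n) (Fin n) K) (i : Fin n) :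
    border₂ a u v C i.succ.succ 0 = -u i := rfl

@[simp] lemma border₂_succ_one (a : K) (u v : Fin n → K) (C : Matrix (Fin n) (Fin n) K) (i : Fin n) :
    border₂ a u v C i.succ.succ 1 = -v i := rfl

@[simp] lemma border₂_succ_succ (a : K) (u v : Fin n → K) (C : Matrix (Fin n) (Fin n) K) (i j : Fin n) :
    border₂ a u v C i.succ.succ j.succ.succ = C i j := rfl

lemma rank_border_congr_le (P D : Matrix (Fin n) (Fin n) K) (w : Fin n → K) :
    (border (P *ᵥ w) (P * D * Pᵀ)).rank ≤ (border w D).rank := by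
  let Q : Matrix (Fin (n + 1)) (Fin (n + 1)) K :=
    Matrix.of (Fin.cons (Fin.cons 1 0) fun i => Fin.cons 0 (P i))
  have hQ : border (P *ᵥ w) (P * D * Pᵀ) = Q * border w D * Qᵀ := by
    have h00 : Q 0 0 = 1 := rfl
    have h0s : ∀ i : Fin n, Q 0 i.succ = 0 := fun _ => rfl
    have hs0 : ∀ i : Fin n, Q i.succ 0 = 0 := fun _ => rfl
    have hss : ∀ i j : Fin n, Q i.succ j.succ = P i j := fun _ _ => rfl
    ext i j
    refine Fin.cases ?_ (fun i => ?_) i <;> refine Fin.cases ?_ (fun j => ?_) j <;>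
      simp [Matrix.mul_apply, Fin.sum_univ_succ, h00, h0s, hs0, hss, Matrix.mulVec, dotProduct,
        mul_comm]
  rw [hQ]
  exact (Matrix.rank_mul_le_left _ _).trans (Matrix.rank_mul_le_right _ _)

lemma rank_border₂_shear_le {C : Matrix (Fin n) (Fin n) K} (hC : IsSkewSym C) (a : K)
    (u v x : Fin n → K) :
    (border₂ (a + u ⬝ᵥ x) u (v - C *ᵥ x) C).rank ≤ (border₂ a u v C).rank := by
  let P : Matrix (Fin (n + 1)) (Fin (n + 1)) K :=
    Matrix.of (Fin.cons (Fin.cons 1 x) fun i => Fin.cons 0 ((1 : Matrix (Fin n) (Fin n) K) i))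
  have h00 : P 0 0 = 1 := rfl
  have h0s : ∀ i : Fin n, P 0 i.succ = x i := fun _ => rfl
  have hs0 : ∀ i : Fin n, P i.succ 0 = 0 := fun _ => rfl
  have hss : ∀ i j : Fin n, P i.succ j.succ = (1 : Matrix (Fin n) (Fin n) K) i j := fun _ _ => rfl
  have hw : P *ᵥ (Fin.cons a u : Fin (n + 1) → K) = Fin.cons (a + u ⬝ᵥ x) u := by
    ext i
    refine Fin.cases ?_ (fun i => ?_) i <;>
      simp [Matrix.mulVec, dotProduct, Fin.sum_univ_succ, h00, h0s, hs0, hss, Matrix.one_apply,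
        mul_comm]
  have hvec : ∀ j, ∑ i, x i * C i j = -∑ i, C j i * x i :=
    fun j => congrFun (vecMul_eq_neg_mulVec hC x) j
  have hself : ∑ i, x i * ∑ j, C i j * x j = 0 := dotProduct_mulVec_self hC x
  have hD : P * border v C * Pᵀ = border (v - C *ᵥ x) C := by
    have hL0 : (P * border v C) 0 0 = -∑ i, x i * v i := by
      simp [Matrix.mul_apply, Fin.sum_univ_succ, h00, h0s]
    have hL0s : ∀ j : Fin n, (P * border v C) 0 j.succ = v j - ∑ i, C j i * x i := fun j => by
      simp [Matrix.mul_apply, Fin.sum_univ_succ, h00, h0s, hvec, sub_eq_add_neg]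
    have hLs : ∀ (i : Fin n) j, (P * border v C) i.succ j = border v C i.succ j := fun i j => by
      simp [Matrix.mul_apply, Fin.sum_univ_succ, hs0, hss, Matrix.one_apply]
    ext i j
    rw [Matrix.mul_apply, Fin.sum_univ_succ]
    refine Fin.cases ?_ (fun i => ?_) i <;> refine Fin.cases ?_ (fun j => ?_) j
    · simp only [hL0, hL0s, Matrix.transpose_apply, h00, h0s, border_zero_zero, sub_mul,
        Finset.sum_sub_distrib]
      simp only [mul_comm _ (x _)] at hself ⊢
      rw [hself]
      ring
    · simp [hL0, hL0s, hs0, hss, Matrix.one_apply, Matrix.mulVec, dotProduct]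
    · simp [hLs, h00, h0s, Matrix.mulVec, dotProduct]
      ring
    · simp [hLs, hs0, hss, Matrix.one_apply]
  have := rank_border_congr_le P (border v C) (Fin.cons a u)
  rwa [hw, hD] at this

lemma rank_border₂_shear {C : Matrix (Fin n) (Fin n) K} (hC : IsSkewSym C) (a : K)
    (u v x : Fin n → K) :
    (border₂ (a + u ⬝ᵥ x) u (v - C *ᵥ x) C).rank = (border₂ a u v C).rank := by
  refine (rank_border₂_shear_le hC a u v x).antisymm ?_
  have := rank_border₂_shear_le hC (a + u ⬝ᵥ x) u (v - C *ᵥ x) (-x)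
  simpa [Matrix.mulVec_neg] using this

lemma rank_le_rank_border₂ (a : K) (u v : Fin n → K) (C : Matrix (Fin n) (Fin n) K) :
    C.rank ≤ (border₂ a u v C).rank :=
  (rank_le_rank_border v C).trans (rank_le_rank_border _ _)

lemma rank_border₂_zero_le {C : Matrix (Fin n) (Fin n) K} (hC : IsSkewSym C) (a : K)
    (v : Fin n → K) : (border₂ a 0 v C).rank ≤ C.rank + 2 := by
  have hcons (b : K) (w : Fin (n + 1) → K) : (Fin.cons b w : Fin (n + 2) → K) 1 = w 0 := rfl
  have hdecomp : border₂ a 0 v C =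
      Matrix.vecMulVec (Pi.single 1 1) (Fin.cons (-a) (Fin.cons 0 v) : Fin (n + 2) → K) +
      Matrix.vecMulVec (Fin.cons a (Fin.cons 0 (-v)) : Fin (n + 2) → K) (Pi.single 1 1) +
      border₂ 0 0 0 C := by
    ext i j
    refine Fin.cases ?_ (fun i => Fin.cases ?_ (fun i => ?_) i) i <;>
      refine Fin.cases ?_ (fun j => Fin.cases ?_ (fun j => ?_) j) j <;>
      simp [Matrix.vecMulVec_apply, hcons, Fin.succ_succ_ne_one]
  have h1 := Matrix.rank_vecMulVec_le (Pi.single 1 1 : Fin (n + 2) → K)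
    (Fin.cons (-a) (Fin.cons 0 v) : Fin (n + 2) → K)
  have h2 := Matrix.rank_vecMulVec_le (Fin.cons a (Fin.cons 0 (-v)) : Fin (n + 2) → K)
    (Pi.single 1 1 : Fin (n + 2) → K)
  have h3 := (rank_border_zero_le (isSkewSym_border (w := 0) hC)).trans (rank_border_zero_le hC)
  have h4 : border₂ 0 0 0 C = border 0 (border 0 C) := by
    unfold border₂
    congr 1
    exact Matrix.cons_zero_zero
  rw [hdecomp, h4]
  grw [rank_add_le, rank_add_le]
  omega

/-- With vanishing first off-diagonal block, the double bordering keeps the rank of `C` exactly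
when `a = 0` and `v` lies in the column space of `C`. -/
lemma rank_border₂_zero_lt_iff {C : Matrix (Fin n) (Fin n) K} (hC : IsSkewSym C) (a : K)
    (v : Fin n → K) :
    (border₂ a 0 v C).rank < C.rank + 2 ↔ a = 0 ∧ ∃ x, C *ᵥ x = v := by
  have hvC := isSkewSym_border (w := v) hC
  constructor
  · intro h
    have hv : ∃ x, C *ᵥ x = v := by
      by_contra! hne
      have := rank_border_ge hC hne
      have := rank_le_rank_border (Fin.cons a 0) (border v C)
      unfold border₂ at h
      omega
    refine ⟨?_, hv⟩
    by_contra ha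
    have hne : ∀ y, border v C *ᵥ y ≠ (Fin.cons a 0 : Fin (n + 1) → K) := by
      intro y hy
      obtain ⟨x, rfl⟩ := hv
      have h0 := congrFun hy 0
      have hs : C *ᵥ (fun i => y i.succ) = y 0 • C *ᵥ x := by
        ext i
        have := congrFun hy i.succ
        simp only [Matrix.mulVec, dotProduct, Fin.sum_univ_succ, border_succ_zero,
          border_succ_succ, Fin.cons_succ, Pi.zero_apply, Pi.smul_apply, smul_eq_mul] at this ⊢
        linear_combination this
      have hdot : C *ᵥ x ⬝ᵥ (fun i => y i.succ) = 0 := by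
        have : C *ᵥ x = -(x ᵥ* C) := by rw [vecMul_eq_neg_mulVec hC, neg_neg]
        rw [this, neg_dotProduct, ← Matrix.dotProduct_mulVec, hs, dotProduct_smul,
          dotProduct_mulVec_self hC]
        simp
      apply ha
      rw [← Fin.cons_zero (α := fun _ => K) a (0 : Fin n → K), ← h0, ← hdot]
      simp [Matrix.mulVec, dotProduct, Fin.sum_univ_succ]
    have := rank_border_ge hvC hne
    have := rank_le_rank_border v C
    unfold border₂ at h
    omega
  · rintro ⟨rfl, x, rfl⟩
    have h0 : (Fin.cons 0 0 : Fin (n + 1) → K) = 0 := Matrix.cons_zero_zero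
    have h1 := rank_border_zero_le hvC
    have h2 := rank_border_mulVec_le hC x
    unfold border₂
    rw [h0]
    omega

open Classical in
lemma card_border₂_zero [Fintype K] {C : Matrix (Fin n) (Fin n) K} (hC : IsSkewSym C) (t : ℕ)
    (a : K) (u : Fin n → K) :
    Nat.card {v // (border₂ 0 u v C).rank ≤ 2 * t} =
      Nat.card {v // (border₂ a u v C).rank ≤ 2 * t} +
        if u = 0 then (if C.rank = 2 * t ∧ a ≠ 0 then Fintype.card K ^ (2 * t) else 0) else 0 := by
  by_cases hu : u = 0
  · subst hu
    rw [if_pos rfl]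
    by_cases h : C.rank = 2 * t ∧ a ≠ 0
    · obtain ⟨hr, ha⟩ := h
      rw [if_pos ⟨hr, ha⟩]
      have heven (b : K) (v : Fin n → K) :
          (border₂ b 0 v C).rank ≤ 2 * t ↔ (border₂ b 0 v C).rank < C.rank + 2 := by
        have := (even_rank (isSkewSym_border (w := Fin.cons b 0) (isSkewSym_border (w := v) hC)))
        obtain ⟨s, hs⟩ := this
        unfold border₂
        omega
      simp only [heven, rank_border₂_zero_lt_iff hC, ha, false_and, true_and, Nat.card_of_isEmpty]
      rw [zero_add, ← hr, ← Nat.card_eq_fintype_card]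
      exact Module.natCard_eq_pow_finrank (K := K) (V := LinearMap.range C.mulVecLin)
    · rw [if_neg h, add_zero]
      by_cases ha : a = 0
      · rw [ha]
      refine Nat.card_congr (Equiv.subtypeEquivRight fun v => ?_)
      have h0 := rank_le_rank_border₂ 0 0 v C
      have h1 := rank_le_rank_border₂ a 0 v C
      have h2 := rank_border₂_zero_le hC 0 v
      have h3 := rank_border₂_zero_le hC a v
      obtain ⟨s, hs⟩ := even_rank hC
      have : C.rank ≠ 2 * t := fun hr => h ⟨hr, ha⟩
      omega
  · rw [if_neg hu, add_zero]
    obtain ⟨i, hi⟩ := Function.ne_iff.1 hu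
    refine Nat.card_congr ((Equiv.subRight (C *ᵥ Pi.single i (a / u i))).subtypeEquiv fun v => ?_)
    have := rank_border₂_shear hC 0 u v (Pi.single i (a / u i))
    rw [dotProduct_single, mul_div_cancel₀ _ hi, zero_add] at this
    rw [← this]
    rfl

open Classical in
lemma card_pairs_border₂_zero [Fintype K] {C : Matrix (Fin n) (Fin n) K} (hC : IsSkewSym C)
    (t : ℕ) (a : K) :
    Nat.card {p : (Fin n → K) × (Fin n → K) // (border₂ 0 p.1 p.2 C).rank ≤ 2 * t} =
      Nat.card {p : (Fin n → K) × (Fin n → K) // (border₂ a p.1 p.2 C).rank ≤ 2 * t} +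
        if C.rank = 2 * t ∧ a ≠ 0 then Fintype.card K ^ (2 * t) else 0 := by
  have key (b : K) :
      Nat.card {p : (Fin n → K) × (Fin n → K) // (border₂ b p.1 p.2 C).rank ≤ 2 * t} =
        ∑ u, Nat.card {v // (border₂ b u v C).rank ≤ 2 * t} := by
    rw [← Nat.card_sigma]
    exact Nat.card_congr
      (Equiv.subtypeProdEquivSigmaSubtype fun u v => (border₂ b u v C).rank ≤ 2 * t)
  rw [key, key, Finset.sum_congr rfl fun u _ => card_border₂_zero hC t a u,
    Finset.sum_add_distrib, Finset.sum_ite_eq' Finset.univ 0, if_pos (Finset.mem_univ _)]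

lemma trace_Estd_mul_border₂ (j : ℕ) (a : K) (u v : Fin n → K) (C : Matrix (Fin n) (Fin n) K) :
    Matrix.trace (Estd K (j + 1) (n + 2) * border₂ a u v C) =
      -2 * a + Matrix.trace (Estd K j n * C) := by
  have hE : ∀ i l : Fin n, Estd K (j + 1) (n + 2) i.succ.succ l.succ.succ = Estd K j n i l := by
    intro i l
    simp only [Estd, Matrix.of_apply, Fin.val_succ]
    congr 1
    · simp only [eq_iff_iff]
      omega
    · congr 1
      simp only [eq_iff_iff]
      omega
  have h01 : Estd K (j + 1) (n + 2) 0 1 = 1 := by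
    simp [Estd]
    omega
  have h10 : Estd K (j + 1) (n + 2) 1 0 = -1 := by
    simp [Estd]
    omega
  have h0s : ∀ l : Fin n, Estd K (j + 1) (n + 2) 0 l.succ.succ = 0 := by
    simp [Estd]
  have hs0 : ∀ i : Fin n, Estd K (j + 1) (n + 2) i.succ.succ 0 = 0 := by
    simp [Estd]
  have h1s : ∀ l : Fin n, Estd K (j + 1) (n + 2) 1 l.succ.succ = 0 := by
    simp [Estd]
  have hs1 : ∀ i : Fin n, Estd K (j + 1) (n + 2) i.succ.succ 1 = 0 := by
    simp [Estd]
  simp [Matrix.trace, Matrix.mul_apply, Fin.sum_univ_succ, hE, h01, h10, h0s, hs0, h1s, hs1]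
  ring

lemma border₂_submatrix {A : Matrix (Fin (n + 2)) (Fin (n + 2)) K} (hA : IsSkewSym A) :
    border₂ (A 0 1) (fun j => A 0 j.succ.succ) (fun j => A 1 j.succ.succ)
      (A.submatrix (fun i => i.succ.succ) (fun i => i.succ.succ)) = A := by
  have h := border_submatrix_succ (isSkewSym_submatrix_succ hA)
  conv_rhs => rw [← border_submatrix_succ hA, ← h]
  unfold border₂
  congr 1
  ext j
  refine Fin.cases ?_ (fun j => ?_) j <;> rfl

/-- Skew-symmetric matrices of bounded rank in the kernel of the trace form, sorted by the
lower right block. -/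
def kernelEquiv (h2 : (2 : K) ≠ 0) (j t : ℕ) :
    {A : Matrix (Fin (n + 2)) (Fin (n + 2)) K //
      IsSkewSym A ∧ A.rank ≤ 2 * t ∧ Matrix.trace (Estd K (j + 1) (n + 2) * A) = 0} ≃
    Σ C : {C : Matrix (Fin n) (Fin n) K // IsSkewSym C},
      {p : (Fin n → K) × (Fin n → K) //
        (border₂ (Matrix.trace (Estd K j n * C.1) / 2) p.1 p.2 C.1).rank ≤ 2 * t} where
  toFun A := ⟨⟨A.1.submatrix (fun i => i.succ.succ) (fun i => i.succ.succ),
      isSkewSym_submatrix_succ (isSkewSym_submatrix_succ A.2.1)⟩,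
    ⟨(fun j => A.1 0 j.succ.succ, fun j => A.1 1 j.succ.succ), by
      obtain ⟨A, hA, hr, htr⟩ := A
      rw [← border₂_submatrix hA, trace_Estd_mul_border₂] at htr
      dsimp only
      rw [← eq_div_of_mul_eq h2 (a := A 0 1) (by linear_combination -htr), border₂_submatrix hA]
      exact hr⟩⟩
  invFun x := ⟨border₂ (Matrix.trace (Estd K j n * x.1.1) / 2) x.2.1.1 x.2.1.2 x.1.1,
    isSkewSym_border (isSkewSym_border x.1.2), x.2.2, by
      rw [trace_Estd_mul_border₂]
      field_simp
      ring⟩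
  left_inv A := by
    obtain ⟨A, hA, hr, htr⟩ := A
    rw [← border₂_submatrix hA, trace_Estd_mul_border₂] at htr
    refine Subtype.ext ?_
    dsimp only
    rw [← eq_div_of_mul_eq h2 (a := A 0 1) (by linear_combination -htr), border₂_submatrix hA]
  right_inv x := rfl

lemma Wcap_add_card_kernel [Fintype K] (k t m : ℕ) :
    Wcap K k t m + Nat.card {A : Matrix (Fin m) (Fin m) K //
      IsSkewSym A ∧ A.rank ≤ 2 * t ∧ Matrix.trace (Estd K k m * A) = 0} = Na K (2 * t) m := by
  classical
  unfold Wcap Na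
  simp only [Nat.card_eq_fintype_card, Fintype.card_subtype]
  rw [← Finset.card_union_of_disjoint]
  · congr 1
    ext A
    simp only [Finset.mem_union, Finset.mem_filter, Finset.mem_univ, true_and]
    tauto
  · rw [Finset.disjoint_filter]
    tauto

lemma Wcap_eq_add [Fintype K] (h2 : (2 : K) ≠ 0) (j t n : ℕ) :
    Wcap K (j + 1) t (n + 2) =
      Wcap K 1 t (n + 2) + Fintype.card K ^ (2 * t) * wSmall K j t n := by
  classical
  have hj := Wcap_add_card_kernel (K := K) (j + 1) t (n + 2)
  have h1 := Wcap_add_card_kernel (K := K) 1 t (n + 2)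
  have hE : Estd K 0 n = 0 := by
    ext i l
    simp [Estd]
  rw [Nat.card_congr (kernelEquiv h2 j t), Nat.card_sigma] at hj
  rw [Nat.card_congr (kernelEquiv h2 0 t), Nat.card_sigma] at h1
  simp only [hE, zero_mul, Matrix.trace_zero, zero_div] at h1
  rw [Finset.sum_congr rfl fun C _ => card_pairs_border₂_zero C.2 t
    (Matrix.trace (Estd K j n * C.1) / 2), Finset.sum_add_distrib] at h1
  have hw : (∑ C : {C : Matrix (Fin n) (Fin n) K // IsSkewSym C},
      if C.1.rank = 2 * t ∧ Matrix.trace (Estd K j n * C.1) / 2 ≠ 0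
        then Fintype.card K ^ (2 * t) else 0) = Fintype.card K ^ (2 * t) * wSmall K j t n := by
    rw [← Finset.sum_filter, Finset.sum_const, smul_eq_mul, mul_comm, wSmall,
      ← Fintype.card_subtype]
    congr 1
    rw [← Nat.card_eq_fintype_card]
    refine Nat.card_congr ((Equiv.subtypeSubtypeEquivSubtypeInter IsSkewSym fun C =>
      C.rank = 2 * t ∧ Matrix.trace (Estd K j n * C) / 2 ≠ 0).trans
        (Equiv.subtypeEquivRight fun C => ?_))
    simp [h2]
  rw [hw] at h1
  omega

end SkewBorder

theorem stmt15 (K : Type) [Field K] [Fintype K] (hchar : ringChar K ≠ 2)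
    (m k t : ℕ) (ht : 0 < t) (htm : 2*t ≤ m) (hk : 1 ≤ k) (hkm : 2*k ≤ m) :
    (Wcap K k t m : ℤ) - (Wcap K 1 t m : ℤ)
        = (Fintype.card K : ℤ)^(2*t) * (wSmall K (k-1) t (m-2) : ℤ) ∧
      Wcap K 1 t m ≤ Wcap K k t m := by
  obtain ⟨j, rfl⟩ := Nat.exists_eq_add_of_le' hk
  obtain ⟨n, rfl⟩ := Nat.exists_eq_add_of_le' (show 2 ≤ m by omega)
  have h := SkewBorder.Wcap_eq_add (Ring.two_ne_zero hchar) j t n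
  rw [Nat.add_sub_cancel, Nat.add_sub_cancel, h]
  exact ⟨by push_cast; ring, Nat.le_add_right _ _⟩
end

section
/- Let q be odd and 0 < 2t ≤ m. Then W_2(2t,m) = (q-1)(q^{m-2t} - 1) q^{m+2t-4} n_a(2t-2, m-2) + (q-1) q^{m-2} N_a(2t-2, m-1), where W_2(2t,m) is the number of m×m skew-symmetric matrices A over F_q of rank at most 2t with tr(E_2 A) ≠ 0, i.e., with A_{21} ≠ 0. -/
open Matrix
theorem LinearMap.finrank_range_prodMap {K V₁ V₂ W₁ W₂ : Type*} [Field K]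
    [AddCommGroup V₁] [Module K V₁] [AddCommGroup V₂] [Module K V₂]
    [AddCommGroup W₁] [Module K W₁] [AddCommGroup W₂] [Module K W₂]
    [FiniteDimensional K W₁] [FiniteDimensional K W₂] (f : V₁ →ₗ[K] W₁) (g : V₂ →ₗ[K] W₂) :
    Module.finrank K (LinearMap.range (f.prodMap g)) =
      Module.finrank K (LinearMap.range f) + Module.finrank K (LinearMap.range g) := by
  have h : LinearMap.range (f.prodMap g) =
      LinearMap.range ((LinearMap.range f).subtype.prodMap (LinearMap.range g).subtype) := by
    simp [LinearMap.range_prodMap]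
  rw [h, LinearMap.finrank_range_of_inj, Module.finrank_prod]
  exact Function.Injective.prodMap (Submodule.injective_subtype _) (Submodule.injective_subtype _)

namespace Matrix

section SkewBorder

variable {K ι κ : Type*} [Field K]

/-- The skew-symmetric matrix obtained from `D` by adding a first column `(0, v)`. -/
def skewBorder (v : ι → K) (D : Matrix ι ι K) : Matrix (Unit ⊕ ι) (Unit ⊕ ι) K :=
  fromBlocks 0 (replicateRow Unit (-v)) (replicateCol Unit v) D

theorem skewBorder_eq_fromRows (v : ι → K) (D : Matrix ι ι K) :
    skewBorder v D = fromRows (replicateRow Unit (Sum.elim 0 (-v)))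
      (fromCols (replicateCol Unit v) D) := by
  ext (i | i) (j | j) <;> simp [skewBorder]

theorem transpose_skewBorder (v : ι → K) (D : Matrix ι ι K) :
    (skewBorder v D)ᵀ = -skewBorder v D ↔ Dᵀ = -D := by
  simp only [skewBorder, fromBlocks_transpose, fromBlocks_neg, fromBlocks_inj]
  constructor
  · exact fun h => h.2.2.2
  · refine fun h => ⟨by simp, ?_, ?_, h⟩ <;> ext <;> simp

theorem eq_skewBorder (h2 : (2 : K) ≠ 0) {A : Matrix (Unit ⊕ ι) (Unit ⊕ ι) K} (hA : Aᵀ = -A) :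
    A = skewBorder (fun i => A (Sum.inr i) (Sum.inl ())) A.toBlocks₂₂ := by
  have h (i j) : A j i = -A i j := congrFun₂ hA i j
  ext (i | i) (j | j)
  · have := h (Sum.inl i) (Sum.inl j)
    have : 2 * A (Sum.inl i) (Sum.inl j) = 0 := by linear_combination this
    simpa [h2, skewBorder] using this
  · simpa [skewBorder] using h _ _
  · rfl
  · rfl

variable [Fintype κ]

theorem range_mulVecLin_fromCols_replicateCol (v : ι → K) (D : Matrix ι κ K) :
    LinearMap.range (fromCols (replicateCol Unit v) D).mulVecLin =
      LinearMap.range D.mulVecLin ⊔ Submodule.span K {v} := by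
  have h : Set.range (fromCols (replicateCol Unit v) D).col = Set.range D.col ∪ {v} := by
    ext x
    simp only [Set.mem_range, Sum.exists, Set.mem_union, Set.mem_singleton_iff]
    constructor
    · rintro (⟨_, rfl⟩ | ⟨a, rfl⟩)
      · exact Or.inr rfl
      · exact Or.inl ⟨a, rfl⟩
    · rintro (⟨a, rfl⟩ | rfl)
      · exact Or.inr ⟨a, rfl⟩
      · exact Or.inl ⟨(), rfl⟩
  rw [range_mulVecLin, range_mulVecLin, h, Submodule.span_union]

theorem rank_fromCols_replicateCol_of_mem {v : ι → K} {D : Matrix ι κ K}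
    (h : v ∈ LinearMap.range D.mulVecLin) :
    (fromCols (replicateCol Unit v) D).rank = D.rank := by
  rw [rank, range_mulVecLin_fromCols_replicateCol, sup_of_le_left, rank]
  simpa using h

variable [Fintype ι]
theorem rank_fromBlocks_diagonal (A : Matrix ι ι K) (D : Matrix κ κ K) :
    (fromBlocks A 0 0 D).rank = A.rank + D.rank := by
  rw [rank, rank, rank, ← LinearMap.finrank_range_prodMap]
  let e := LinearEquiv.sumArrowLequivProdArrow ι κ K K
  have h : (fromBlocks A 0 0 D).mulVecLin =
      e.symm.toLinearMap ∘ₗ (A.mulVecLin.prodMap D.mulVecLin) ∘ₗ e.toLinearMap := by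
    refine LinearMap.ext fun x => e.injective ?_
    ext i <;> simp [e, fromBlocks_mulVec] <;> rfl
  rw [h, LinearMap.range_comp, LinearMap.range_comp, LinearEquiv.range, Submodule.map_top]
  exact LinearEquiv.finrank_map_eq e.symm _

theorem rank_fromBlocks_of_invertible [DecidableEq ι] [DecidableEq κ] (A : Matrix ι ι K)
    [Invertible A] (B : Matrix ι κ K) (C : Matrix κ ι K) (D : Matrix κ κ K) :
    (fromBlocks A B C D).rank = Fintype.card ι + (D - C * ⅟A * B).rank := by
  rw [fromBlocks_eq_of_invertible₁₁, rank_mul_eq_left_of_isUnit_det, rank_mul_eq_right_of_isUnit_det,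
    rank_fromBlocks_diagonal, rank_of_isUnit _ (isUnit_of_invertible A)]
  all_goals simp

theorem rank_fromCols_replicateCol_of_notMem {v : ι → K} {D : Matrix ι κ K}
    (h : v ∉ LinearMap.range D.mulVecLin) :
    (fromCols (replicateCol Unit v) D).rank = D.rank + 1 := by
  rw [rank, range_mulVecLin_fromCols_replicateCol, Submodule.finrank_sup_span_singleton h, rank]

theorem rank_fromRows_replicateRow_of_mem {w : κ → K} {D : Matrix ι κ K}
    (h : w ∈ LinearMap.range Dᵀ.mulVecLin) :
    (fromRows (replicateRow Unit w) D).rank = D.rank := by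
  rw [← rank_transpose, transpose_fromRows, transpose_replicateRow,
    rank_fromCols_replicateCol_of_mem h, rank_transpose]

theorem rank_fromRows_replicateRow_of_notMem {w : κ → K} {D : Matrix ι κ K}
    (h : w ∉ LinearMap.range Dᵀ.mulVecLin) :
    (fromRows (replicateRow Unit w) D).rank = D.rank + 1 := by
  rw [← rank_transpose, transpose_fromRows, transpose_replicateRow,
    rank_fromCols_replicateCol_of_notMem h, rank_transpose]

theorem dotProduct_mulVec_self_of_transpose_eq_neg (h2 : (2 : K) ≠ 0) {D : Matrix ι ι K}
    (hD : Dᵀ = -D) (u : ι → K) : u ⬝ᵥ D *ᵥ u = 0 := by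
  have h : u ⬝ᵥ D *ᵥ u = -(u ⬝ᵥ D *ᵥ u) := by
    conv_lhs => rw [dotProduct_mulVec, ← mulVec_transpose, hD, neg_mulVec, neg_dotProduct,
      dotProduct_comm]
  have : 2 * (u ⬝ᵥ D *ᵥ u) = 0 := by linear_combination h
  simpa [h2] using this

theorem rank_skewBorder_of_mem (h2 : (2 : K) ≠ 0) {v : ι → K} {D : Matrix ι ι K} (hD : Dᵀ = -D)
    (h : v ∈ LinearMap.range D.mulVecLin) : (skewBorder v D).rank = D.rank := by
  rw [skewBorder_eq_fromRows, rank_fromRows_replicateRow_of_mem,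
    rank_fromCols_replicateCol_of_mem h]
  obtain ⟨u, rfl⟩ := h
  refine ⟨u, ?_⟩
  rw [mulVecLin_apply, mulVec_transpose, vecMul_fromCols]
  ext (i | i)
  · simpa [vecMul, replicateCol] using dotProduct_mulVec_self_of_transpose_eq_neg h2 hD u
  · simp [← mulVec_transpose, hD, neg_mulVec]

theorem rank_skewBorder_of_notMem {v : ι → K} {D : Matrix ι ι K} (hD : Dᵀ = -D)
    (h : v ∉ LinearMap.range D.mulVecLin) : (skewBorder v D).rank = D.rank + 2 := by
  rw [skewBorder_eq_fromRows, rank_fromRows_replicateRow_of_notMem,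
    rank_fromCols_replicateCol_of_notMem h]
  rintro ⟨u, hu⟩
  apply h
  refine ⟨u, ?_⟩
  rw [mulVecLin_apply, mulVec_transpose, vecMul_fromCols] at hu
  ext i
  have := congrFun hu (Sum.inr i)
  simpa [← mulVec_transpose, hD, neg_mulVec] using this

theorem even_rank_of_transpose_eq_neg (h2 : (2 : K) ≠ 0) {n : ℕ} {D : Matrix (Fin n) (Fin n) K}
    (hD : Dᵀ = -D) : Even D.rank := by
  induction n with
  | zero => simp [Nat.le_zero.mp D.rank_le_width]
  | succ n ih =>
    let e : Unit ⊕ Fin n ≃ Fin (n + 1) := Fintype.equivOfCardEq (by simp; omega)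
    have hA : (D.submatrix e e)ᵀ = -D.submatrix e e := by
      rw [transpose_submatrix, hD]; rfl
    rw [← rank_submatrix D e e]
    obtain ⟨v, B, hB⟩ : ∃ v B, D.submatrix e e = skewBorder v B := ⟨_, _, eq_skewBorder h2 hA⟩
    rw [hB, transpose_skewBorder] at hA
    rw [hB]
    by_cases h : v ∈ LinearMap.range B.mulVecLin
    · rw [rank_skewBorder_of_mem h2 hA h]
      exact ih hA
    · rw [rank_skewBorder_of_notMem hA h]
      exact (ih hA).add even_two

end SkewBorder

section SkewSchur

variable {K κ : Type*} [Field K]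

/-- The `2 × 2` skew-symmetric matrix with entry `a` in position `(0, 1)`. -/
def skewTwo (a : Kˣ) : Matrix (Fin 2) (Fin 2) K := !![0, a; -a, 0]

instance (a : Kˣ) : Invertible (skewTwo a) where
  invOf := -skewTwo a⁻¹
  invOf_mul_self := by ext i j; fin_cases i <;> fin_cases j <;> simp [skewTwo]
  mul_invOf_self := by ext i j; fin_cases i <;> fin_cases j <;> simp [skewTwo]

theorem invOf_skewTwo (a : Kˣ) : ⅟(skewTwo a) = -skewTwo a⁻¹ := rfl

theorem transpose_skewTwo (a : Kˣ) : (skewTwo a)ᵀ = -skewTwo a := by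
  ext i j; fin_cases i <;> fin_cases j <;> simp [skewTwo]

/-- The skew-symmetric block matrix with leading block `skewTwo a`, upper right block `C` and
Schur complement `S`. -/
def skewOfSchur (a : Kˣ) (C : Matrix (Fin 2) κ K) (S : Matrix κ κ K) :
    Matrix (Fin 2 ⊕ κ) (Fin 2 ⊕ κ) K :=
  fromBlocks (skewTwo a) C (-Cᵀ) (S - Cᵀ * ⅟(skewTwo a) * C)

theorem transpose_skewOfSchur (a : Kˣ) (C : Matrix (Fin 2) κ K) (S : Matrix κ κ K) :
    (skewOfSchur a C S)ᵀ = -skewOfSchur a C S ↔ Sᵀ = -S := by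
  have h : (Cᵀ * ⅟(skewTwo a) * C)ᵀ = -(Cᵀ * ⅟(skewTwo a) * C) := by
    simp only [transpose_mul, transpose_transpose, invOf_skewTwo, transpose_neg, transpose_skewTwo,
      Matrix.mul_assoc, Matrix.mul_neg, Matrix.neg_mul]
  simp only [skewOfSchur, fromBlocks_transpose, fromBlocks_neg, fromBlocks_inj, transpose_skewTwo,
    transpose_neg, transpose_transpose, true_and]
  rw [transpose_sub, h, neg_sub', sub_left_inj, neg_neg]
  simp

theorem rank_skewOfSchur [Fintype κ] (a : Kˣ) (C : Matrix (Fin 2) κ K) (S : Matrix κ κ K) :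
    (skewOfSchur a C S).rank = S.rank + 2 := by
  classical
  rw [skewOfSchur, rank_fromBlocks_of_invertible]
  simp [Matrix.neg_mul, add_comm]

theorem skewOfSchur_injective :
    Function.Injective fun p : Kˣ × Matrix (Fin 2) κ K × Matrix κ κ K =>
      skewOfSchur p.1 p.2.1 p.2.2 := by
  rintro ⟨a, C, S⟩ ⟨a', C', S'⟩ h
  obtain ⟨h₁, rfl, -, h₂⟩ := fromBlocks_inj.mp h
  obtain rfl : a = a' := Units.ext (by simpa [skewTwo] using congrFun₂ h₁ 0 1)
  simpa using h₂

theorem exists_skewOfSchur (h2 : (2 : K) ≠ 0) {A : Matrix (Fin 2 ⊕ κ) (Fin 2 ⊕ κ) K}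
    (hA : Aᵀ = -A) (h : A (Sum.inl 0) (Sum.inl 1) ≠ 0) : ∃ a C S, A = skewOfSchur a C S := by
  have hs (i j) : A j i = -A i j := congrFun₂ hA i j
  have h0 (i) : A i i = 0 := by
    have : 2 * A i i = 0 := by linear_combination hs i i
    simpa [h2] using this
  let a := Units.mk0 _ h
  refine ⟨a, A.toBlocks₁₂, A.toBlocks₂₂ + A.toBlocks₁₂ᵀ * ⅟(skewTwo a) * A.toBlocks₁₂, ?_⟩
  rw [skewOfSchur, add_sub_cancel_right]
  conv_lhs => rw [← fromBlocks_toBlocks A]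
  congr 1
  · ext i j
    fin_cases i <;> fin_cases j
    · exact h0 _
    · rfl
    · exact hs _ _
    · exact h0 _
  · ext i j
    exact hs _ _

end SkewSchur

variable {K : Type} [Field K]

theorem isSkewSym_iff (h2 : (2 : K) ≠ 0) {m : ℕ}
    {A : Matrix (Fin m) (Fin m) K} : IsSkewSym A ↔ Aᵀ = -A := by
  refine ⟨And.left, fun h => ⟨h, fun i => ?_⟩⟩
  have : A i i = -A i i := congrFun₂ h i i
  have : 2 * A i i = 0 := by linear_combination this
  simpa [h2] using this

theorem trace_Estd_one_mul_ne_zero_iff (h2 : (2 : K) ≠ 0) {n : ℕ}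
    {A : Matrix (Fin (2 + n)) (Fin (2 + n)) K} (hA : Aᵀ = -A) :
    trace (Estd K 1 (2 + n) * A) ≠ 0 ↔ A (Fin.castAdd n 0) (Fin.castAdd n 1) ≠ 0 := by
  have hE : Estd K 1 (2 + n) = single (Fin.castAdd n 0) (Fin.castAdd n 1) 1 -
      single (Fin.castAdd n 1) (Fin.castAdd n 0) 1 := by
    ext i j
    simp only [Estd, of_apply, sub_apply, single_apply, Fin.ext_iff, Fin.val_castAdd]
    simp only [Fin.val_zero, Fin.val_one]
    split_ifs <;> first | omega | simp
  have : A (Fin.castAdd n 1) (Fin.castAdd n 0) = -A (Fin.castAdd n 0) (Fin.castAdd n 1) :=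
    congrFun₂ hA _ _
  rw [hE, Matrix.sub_mul, trace_sub, trace_single_mul, trace_single_mul, this, one_smul, one_smul,
    ← neg_add', neg_ne_zero, ← two_mul, mul_ne_zero_iff]
  simp [h2]

theorem transpose_submatrix_eq_neg_iff {R α β : Type*} [Neg R] (e : α ≃ β) {A : Matrix β β R} :
    (A.submatrix e e)ᵀ = -A.submatrix e e ↔ Aᵀ = -A :=
  (reindex e.symm e.symm).injective.eq_iff (a := Aᵀ) (b := -A)

theorem rank_skewBorder_le_iff (h2 : (2 : K) ≠ 0) {n s : ℕ} (hs : Even s) (v : Fin n → K)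
    {D : Matrix (Fin n) (Fin n) K} (hD : Dᵀ = -D) :
    (skewBorder v D).rank ≤ s ↔
      D.rank < s ∨ D.rank = s ∧ v ∈ LinearMap.range D.mulVecLin := by
  obtain ⟨k, hk⟩ := even_rank_of_transpose_eq_neg h2 hD
  obtain ⟨l, rfl⟩ := hs
  by_cases h : v ∈ LinearMap.range D.mulVecLin
  · rw [rank_skewBorder_of_mem h2 hD h]
    simp only [h, and_true]
    omega
  · rw [rank_skewBorder_of_notMem hD h]
    simp only [h, and_false, or_false]
    omega

theorem Na_succ_eq_card (h2 : (2 : K) ≠ 0) (n s : ℕ) :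
    Na K s (n + 1) = Nat.card {p : Matrix (Fin n) (Fin n) K × (Fin n → K) //
      IsSkewSym p.1 ∧ (skewBorder p.2 p.1).rank ≤ s} := by
  let e : Unit ⊕ Fin n ≃ Fin (n + 1) := Fintype.equivOfCardEq (by simp; omega)
  symm
  have hsub (B : Matrix (Unit ⊕ Fin n) (Unit ⊕ Fin n) K) :
      (B.submatrix e.symm e.symm).submatrix e e = B := by simp
  refine Nat.card_eq_of_bijective (fun p =>
    ⟨(skewBorder p.1.2 p.1.1).submatrix e.symm e.symm, ?_⟩) ⟨?_, ?_⟩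
  · rw [isSkewSym_iff h2, transpose_submatrix_eq_neg_iff, transpose_skewBorder, rank_submatrix]
    exact ⟨p.2.1.1, p.2.2⟩
  · rintro ⟨⟨D, v⟩, _⟩ ⟨⟨D', v'⟩, _⟩ h
    have h := congrArg (·.submatrix e e) (Subtype.ext_iff.mp h)
    simp only [hsub] at h
    obtain ⟨-, -, hv, rfl⟩ := fromBlocks_inj.mp h
    obtain rfl := replicateCol_injective hv
    rfl
  · rintro ⟨A, hA, hr⟩
    rw [isSkewSym_iff h2] at hA
    have hA' := (transpose_submatrix_eq_neg_iff e).mpr hA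
    obtain ⟨v, D, h⟩ : ∃ v D, A.submatrix e e = skewBorder v D := ⟨_, _, eq_skewBorder h2 hA'⟩
    rw [h, transpose_skewBorder] at hA'
    rw [← rank_submatrix A e e, h] at hr
    refine ⟨⟨(D, v), (isSkewSym_iff h2).mpr hA', hr⟩, Subtype.ext ?_⟩
    simp [← h]

variable [Fintype K]

theorem Wcap_one_eq (h2 : (2 : K) ≠ 0) (n s t : ℕ) (hs : 2 * t = s + 2) :
    Wcap K 1 t (2 + n) =
      (Fintype.card K - 1) * Fintype.card K ^ (2 * n) * Na K s n := by
  have hcard : (Fintype.card K - 1) * Fintype.card K ^ (2 * n) * Na K s n =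
      Nat.card (Kˣ × Matrix (Fin 2) (Fin n) K ×
        {S : Matrix (Fin n) (Fin n) K // IsSkewSym S ∧ S.rank ≤ s}) := by
    classical
    have hC : Nat.card (Matrix (Fin 2) (Fin n) K) = Fintype.card K ^ (2 * n) := by
      simp [Matrix, ← pow_mul, mul_comm]
    rw [Nat.card_prod, Nat.card_prod, Nat.card_eq_fintype_card (α := Kˣ), Fintype.card_units, Na,
      mul_assoc, hC]
  rw [hcard, Wcap]
  let e : Fin 2 ⊕ Fin n ≃ Fin (2 + n) := finSumFinEquiv
  symm
  have hsub (B : Matrix (Fin 2 ⊕ Fin n) (Fin 2 ⊕ Fin n) K) :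
      (B.submatrix e.symm e.symm).submatrix e e = B := by simp
  refine Nat.card_eq_of_bijective (fun p =>
    ⟨(skewOfSchur p.1 p.2.1 p.2.2.1).submatrix e.symm e.symm, ?_⟩) ⟨?_, ?_⟩
  · obtain ⟨a, C, S, hS⟩ := p
    have hA : ((skewOfSchur a C S).submatrix e.symm e.symm)ᵀ =
        -(skewOfSchur a C S).submatrix e.symm e.symm := by
      rw [transpose_submatrix_eq_neg_iff, transpose_skewOfSchur]
      exact hS.1.1
    refine ⟨(isSkewSym_iff h2).mpr hA, ?_, (trace_Estd_one_mul_ne_zero_iff h2 hA).mpr ?_⟩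
    · rw [rank_submatrix, rank_skewOfSchur, hs]
      exact Nat.add_le_add_right hS.2 2
    · rw [← finSumFinEquiv_apply_left, ← finSumFinEquiv_apply_left]
      simp [e, skewOfSchur, skewTwo]
  · rintro ⟨a, C, S⟩ ⟨a', C', S'⟩ h
    have h := congrArg (·.submatrix e e) (Subtype.ext_iff.mp h)
    simp only [hsub] at h
    have := skewOfSchur_injective (a₁ := (a, C, S.1)) (a₂ := (a', C', S'.1)) h
    simp only [Prod.mk.injEq] at this ⊢
    exact ⟨this.1, this.2.1, Subtype.ext this.2.2⟩
  · rintro ⟨A, hA, hr, ht⟩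
    rw [isSkewSym_iff h2] at hA
    rw [trace_Estd_one_mul_ne_zero_iff h2 hA] at ht
    have hA' := (transpose_submatrix_eq_neg_iff e).mpr hA
    obtain ⟨a, C, S, h⟩ := exists_skewOfSchur h2 hA' (by simpa [e] using ht)
    rw [h, transpose_skewOfSchur] at hA'
    have hr' := rank_submatrix A e e
    rw [h, rank_skewOfSchur] at hr'
    refine ⟨(a, C, ⟨S, (isSkewSym_iff h2).mpr hA', by omega⟩), Subtype.ext ?_⟩
    simp [← h]

theorem Na_eq_add_na (s n : ℕ) :
    Na K s n = Nat.card {D : Matrix (Fin n) (Fin n) K // IsSkewSym D ∧ D.rank < s} + na K s n := by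
  classical
  simp only [Na, na, Nat.card_eq_fintype_card]
  rw [← Fintype.card_subtype_or_disjoint]
  · simp only [le_iff_lt_or_eq, and_or_left]
  · simp only [Pi.disjoint_iff, Prop.disjoint_iff]
    grind

theorem card_rank_skewBorder_le (h2 : (2 : K) ≠ 0) {n s : ℕ} (hs : Even s)
    (D : Matrix (Fin n) (Fin n) K) [Decidable (IsSkewSym D)] :
    Nat.card {v : Fin n → K // IsSkewSym D ∧ (skewBorder v D).rank ≤ s} =
      (if IsSkewSym D ∧ D.rank < s then Fintype.card K ^ n else 0) +
        if IsSkewSym D ∧ D.rank = s then Fintype.card K ^ s else 0 := by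
  by_cases hD : IsSkewSym D
  swap
  · simp [hD]
  simp only [hD, true_and, rank_skewBorder_le_iff h2 hs _ hD.1]
  rcases lt_trichotomy D.rank s with h | h | h
  · simp [h, h.ne]
  · subst h
    simp only [lt_irrefl, false_or, true_and, if_true, if_false, zero_add]
    exact (Module.natCard_eq_pow_finrank (K := K)).trans (by rw [Nat.card_eq_fintype_card]; rfl)
  · simp [h.not_gt, h.ne']

theorem Na_succ (h2 : (2 : K) ≠ 0) (n : ℕ) {s : ℕ} (hs : Even s) :
    Na K s (n + 1) =
      Fintype.card K ^ n *
          Nat.card {D : Matrix (Fin n) (Fin n) K // IsSkewSym D ∧ D.rank < s} +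
        Fintype.card K ^ s * na K s n := by
  classical
  rw [Na_succ_eq_card h2, Nat.card_congr (Equiv.subtypeProdEquivSigmaSubtype
    fun (D : Matrix (Fin n) (Fin n) K) (v : Fin n → K) => IsSkewSym D ∧ (skewBorder v D).rank ≤ s),
    Nat.card_sigma]
  simp only [card_rank_skewBorder_le h2 hs, Finset.sum_add_distrib, ← Finset.sum_filter,
    Finset.sum_const, smul_eq_mul, na, Nat.card_eq_fintype_card, Fintype.card_subtype, mul_comm]

end Matrix

theorem stmt16 (K : Type) [Field K] [Fintype K] (hchar : ringChar K ≠ 2)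
    (m t : ℕ) (ht : 0 < t) (htm : 2*t ≤ m) :
    Wcap K 1 t m =
      (Fintype.card K - 1) * (Fintype.card K ^ (m - 2*t) - 1)
          * Fintype.card K ^ (m + 2*t - 4) * na K (2*t-2) (m-2)
        + (Fintype.card K - 1) * Fintype.card K ^ (m-2) * Na K (2*t-2) (m-1) := by
  have h2 : (2 : K) ≠ 0 := Ring.two_ne_zero hchar
  obtain ⟨u, rfl⟩ : ∃ u, t = u + 1 := ⟨t - 1, by omega⟩
  obtain ⟨d, rfl⟩ : ∃ d, m = 2 + (2 * u + d) := ⟨m - 2 * (u + 1), by omega⟩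
  rw [Matrix.Wcap_one_eq h2 (2 * u + d) (2 * u) (u + 1) (by omega),
    show 2 + (2 * u + d) - 2 * (u + 1) = d by omega,
    show 2 + (2 * u + d) + 2 * (u + 1) - 4 = 2 * u + d + 2 * u by omega,
    show 2 * (u + 1) - 2 = 2 * u by omega, show 2 + (2 * u + d) - 2 = 2 * u + d by omega,
    show 2 + (2 * u + d) - 1 = 2 * u + d + 1 by omega, Matrix.Na_succ h2 _ (even_two_mul u),
    Matrix.Na_eq_add_na]
  obtain ⟨c, hc⟩ : ∃ c, Fintype.card K ^ d = c + 1 :=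
    ⟨_, (Nat.sub_add_cancel (Nat.one_le_pow _ _ Fintype.card_pos)).symm⟩
  simp only [two_mul (2 * u + d), pow_add, hc, Nat.add_sub_cancel]
  ring
end
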